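/- Cancellation of higher order terms, scalar-H case (Corollary 4.8, estimate (K), for classical functions). Let n ≥ 3, Ω ⊆ ℝⁿ a domain, 2 ≤ k ≤ n, H₂ : Ω×ℝ×ℝⁿ → ℝ C^{1,1}_loc, and H(x,z,ξ) := H₂(x,z,ξ)I. Fix concentric balls with closure(B_{2R}) ⊂ Ω, and constants M > 0 and c₀ > 0. Then there is a constant C, depending only on n, k, R, H₂, M and c₀, such that the following holds. Let u ∈ C³(Ω) with sup_{B_{2R}}(|u|+|∇u|) ≤ M; let C₁ ∈ [0,M] satisfy Δu + C₁ ≥ 1 and |∇²u| ≤ Δu + C₁ pointwise on B_{2R}; let q > 1, ρ ∈ (0,R/3], 0 < |h| < ρ, and let η be a smooth function supported in B_{R+2ρ} with 0 ≤ η ≤ 1, η ≡ 1 on B_{R+ρ}, |∇η| ≤ c₀/ρ and |∇²η| ≤ c₀/ρ². Set ṽ := v_h + C₁. Then ∫_{B_{R+2ρ}} η (ṽ⁺)^{q−1} Σ_j (Σ_i ∂_i(F[u]^{ij})) ∂_j ṽ + Σ_{l=1}^n ∫_{B_{R+2ρ}} η (ṽ⁺)^{q−1} Σ_{i,j} F[u]^{ij}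 Δ_{ll}^h((H[u])_{ij}) ≥ −(C/ρ)·( ∫_{B_{R+2ρ}}(ṽ⁺)^{q+k} + ∫_{B_{R+3ρ}}(Δu+C₁)^{q+k} ). -/

import Mathlib

open MeasureTheory Metric Set Matrix

noncomputable section

/-- The `k`-th elementary symmetric polynomial of the eigenvalues of an `n × n` real
matrix, defined via the coefficients of the characteristic polynomial. -/
def esymmMat {n : ℕ} (k : ℕ) (A : Matrix (Fin n) (Fin n) ℝ) : ℝ :=
  (-1 : ℝ) ^ k * A.charpoly.coeff (n - k)

/-- `λ(A) ∈ Γ_k^+`, i.e. `σ_j(A) > 0` for all `1 ≤ j ≤ k`. -/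
def GammaPlus {n : ℕ} (k : ℕ) (A : Matrix (Fin n) (Fin n) ℝ) : Prop :=
  ∀ j : ℕ, 1 ≤ j → j ≤ k → 0 < esymmMat j A

/-- The Newton tensors `T_0(A) = I`, `T_j(A) = σ_j(A) I - T_{j-1}(A) A`. -/
def newtonT {n : ℕ} : ℕ → Matrix (Fin n) (Fin n) ℝ → Matrix (Fin n) (Fin n) ℝ
  | 0, _ => 1
  | (j + 1), A => esymmMat (j + 1) A • (1 : Matrix (Fin n) (Fin n) ℝ) - newtonT j A * A

/-- `i`-th partial derivative. -/
def pd {n : ℕ} (i : Fin n) (w : (Fin n → ℝ) → ℝ) (x : Fin n → ℝ) : ℝ :=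
  fderiv ℝ w x (Pi.single i 1)

/-- Gradient as a vector. -/
def grad {n : ℕ} (w : (Fin n → ℝ) → ℝ) (x : Fin n → ℝ) : Fin n → ℝ :=
  fun i => pd i w x

/-- Hessian matrix. -/
def hess {n : ℕ} (w : (Fin n → ℝ) → ℝ) (x : Fin n → ℝ) : Matrix (Fin n) (Fin n) ℝ :=
  Matrix.of fun i j => pd i (pd j w) x

/-- Squared Euclidean norm of a vector. -/
def normSq {n : ℕ} (ξ : Fin n → ℝ) : ℝ := ∑ i, ξ i ^ 2

/-- Euclidean norm of a vector. -/
def vnorm {n : ℕ} (ξ : Fin n → ℝ) : ℝ := Real.sqrt (∑ i, ξ i ^ 2)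

/-- Operator norm of a matrix, viewed as a linear map between Euclidean spaces. -/
def matNorm {n : ℕ} (M : Matrix (Fin n) (Fin n) ℝ) : ℝ :=
  ‖LinearMap.toContinuousLinearMap (Matrix.toEuclideanLin M)‖

/-- Laplacian. -/
def lapl {n : ℕ} (w : (Fin n → ℝ) → ℝ) (x : Fin n → ℝ) : ℝ := ∑ l, pd l (pd l w) x

/-- `W^{2,p}` norm (with classical derivatives) on a set. -/
def W2pNorm {n : ℕ} (p : ℝ) (w : (Fin n → ℝ) → ℝ) (B : Set (Fin n → ℝ)) : ℝ :=
  (∫ x in B, (|w x| ^ p + vnorm (grad w x) ^ p + matNorm (hess w x) ^ p)) ^ (1 / p)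

/-- `C^{1,1}_loc` on a set: continuously differentiable with locally Lipschitz
first derivatives. -/
def C11On {E F : Type*} [NormedAddCommGroup E] [NormedSpace ℝ E]
    [NormedAddCommGroup F] [NormedSpace ℝ F] (f : E → F) (s : Set E) : Prop :=
  ContDiffOn ℝ 1 f s ∧
    ∀ x ∈ s, ∃ (K : NNReal) (t : Set E), t ∈ nhdsWithin x s ∧
      LipschitzOnWith K (fderivWithin ℝ f s) t

/-- First order difference quotient `∇_l^h`. -/
def dq {n : ℕ} (l : Fin n) (h : ℝ) (w : (Fin n → ℝ) → ℝ) (x : Fin n → ℝ) : ℝ :=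
  (w (x + h • (Pi.single l 1 : Fin n → ℝ)) - w x) / h

/-- Second order difference quotient `Δ_{ll}^h`. -/
def ddq {n : ℕ} (l : Fin n) (h : ℝ) (w : (Fin n → ℝ) → ℝ) (x : Fin n → ℝ) : ℝ :=
  (w (x + h • (Pi.single l 1 : Fin n → ℝ)) - 2 * w x + w (x - h • (Pi.single l 1 : Fin n → ℝ))) / h ^ 2

/-- `L^s` seminorm (as an extended real number) of a function on a set. -/
def lpN {n : ℕ} (s : ℝ) (w : (Fin n → ℝ) → ℝ) (S : Set (Fin n → ℝ)) : ENNReal :=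
  (∫⁻ x in S, ENNReal.ofReal (|w x| ^ s)) ^ (1 / s)

end

/-! ### Algebra of Newton tensors -/

section Algebra

lemma det_hasDerivAt {n : ℕ} {M : ℝ → Matrix (Fin n) (Fin n) ℝ} {M' : Matrix (Fin n) (Fin n) ℝ}
    {s : ℝ} (h : ∀ i j, HasDerivAt (fun t => M t i j) (M' i j) s) :
    HasDerivAt (fun t => (M t).det) (trace (adjugate (M s) * M')) s := by
  have h1 : HasDerivAt (fun t => (M t).det)
      (∑ σ : Equiv.Perm (Fin n), (Equiv.Perm.sign σ : ℤ) •
        ∑ i, (∏ j ∈ Finset.univ.erase i, M s (σ j) j) • M' (σ i) i) s := by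
    simp only [Matrix.det_apply]
    refine HasDerivAt.fun_sum fun σ _ => ?_
    have := HasDerivAt.fun_finsetProd (u := Finset.univ)
      (f := fun i t => M t (σ i) i) (f' := fun i => M' (σ i) i) (x := s) fun i _ => h (σ i) i
    have h2 := this.const_smul ((Equiv.Perm.sign σ : ℤ) : ℝ)
    convert h2 using 1
    · funext t
      simp [Units.smul_def]
    · rw [← Int.cast_smul_eq_zsmul ℝ]
  convert h1 using 1
  have h2 : ∀ i, (adjugate (M s) * M') i i = ((M s).updateCol i (fun j => M' j i)).det := by
    intro i
    rw [← Matrix.cramer_apply, Matrix.cramer_eq_adjugate_mulVec]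
    rfl
  simp only [Matrix.trace, Matrix.diag, h2, Matrix.det_apply, Finset.smul_sum]
  rw [Finset.sum_comm]
  refine Finset.sum_congr rfl fun σ _ => Finset.sum_congr rfl fun i _ => ?_
  rw [Units.smul_def]
  congr 1
  rw [← Finset.prod_erase_mul _ _ (Finset.mem_univ i)]
  simp only [Matrix.updateCol_self, smul_eq_mul]
  congr 1
  refine Finset.prod_congr rfl fun j hj => ?_
  rw [Matrix.updateCol_ne (Finset.ne_of_mem_erase hj)]

lemma det_expand {n : ℕ} (A : Matrix (Fin n) (Fin n) ℝ) (t : ℝ) :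
    (t • (1 : Matrix (Fin n) (Fin n) ℝ) - A).det
      = ∑ m ∈ Finset.range (n + 1), (-1 : ℝ) ^ m * esymmMat m A * t ^ (n - m) := by
  have h1 : (t • (1 : Matrix (Fin n) (Fin n) ℝ) - A).det = A.charpoly.eval t := by
    rw [Matrix.eval_charpoly, Matrix.smul_one_eq_diagonal]; rfl
  rw [h1, Polynomial.eval_eq_sum_range, Matrix.charpoly_natDegree_eq_dim, Fintype.card_fin,
    ← Finset.sum_range_reflect]
  refine Finset.sum_congr rfl fun m hm => ?_
  have : n + 1 - 1 - m = n - m := by omega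
  rw [this, esymmMat, ← mul_assoc, ← pow_add, Even.neg_one_pow ⟨m, rfl⟩, one_mul]

lemma newtonT_closed {n : ℕ} (A : Matrix (Fin n) (Fin n) ℝ) (m : ℕ) :
    newtonT m A = ∑ j ∈ Finset.range (m + 1), ((-1 : ℝ) ^ j * esymmMat (m - j) A) • A ^ j := by
  induction m with
  | zero =>
    simp only [newtonT, zero_add, Finset.range_one, Finset.sum_singleton, pow_zero, one_mul,
      esymmMat, Nat.sub_zero, Nat.sub_self]
    have := Matrix.charpoly_monic A
    rw [Polynomial.Monic, Polynomial.leadingCoeff, Matrix.charpoly_natDegree_eq_dim,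
      Fintype.card_fin] at this
    rw [this, one_smul]
  | succ m ih =>
    rw [newtonT, ih, Finset.sum_range_succ' _ (m + 1), Finset.sum_mul]
    simp only [pow_zero, one_mul, Nat.sub_zero, Nat.add_sub_add_right]
    rw [add_comm (∑ _ ∈ _, _ : Matrix (Fin n) (Fin n) ℝ), sub_eq_add_neg, ← Finset.sum_neg_distrib]
    congr 1
    refine Finset.sum_congr rfl fun j _ => ?_
    rw [smul_mul_assoc, ← pow_succ, ← neg_smul, pow_succ (-1 : ℝ)]
    congr 1; ring

lemma newtonT_top {n : ℕ} (A : Matrix (Fin n) (Fin n) ℝ) : newtonT n A = 0 := by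
  have h := Matrix.aeval_self_charpoly A
  rw [Polynomial.aeval_eq_sum_range, Matrix.charpoly_natDegree_eq_dim, Fintype.card_fin] at h
  rw [newtonT_closed]
  have : ∑ j ∈ Finset.range (n + 1), ((-1 : ℝ) ^ j * esymmMat (n - j) A) • A ^ j
    = (-1 : ℝ) ^ n • ∑ j ∈ Finset.range (n + 1), A.charpoly.coeff j • A ^ j := by
    rw [Finset.smul_sum]
    refine Finset.sum_congr rfl fun j hj => ?_
    have hj' : j ≤ n := by have := Finset.mem_range.1 hj; omega
    rw [smul_smul, esymmMat, ← mul_assoc, ← pow_add]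
    congr 3
    · omega
    · omega
  rw [this, h, smul_zero]

lemma newtonT_comm {n : ℕ} (A : Matrix (Fin n) (Fin n) ℝ) (m : ℕ) :
    newtonT m A * A = A * newtonT m A := by
  induction m with
  | zero => simp [newtonT]
  | succ m ih =>
    rw [newtonT, sub_mul, mul_sub, smul_mul_assoc, mul_smul_comm, one_mul, mul_one, ← mul_assoc A,
      ← ih]

lemma newtonT_transpose {n : ℕ} {A : Matrix (Fin n) (Fin n) ℝ} (hA : Aᵀ = A) (m : ℕ) :
    (newtonT m A)ᵀ = newtonT m A := by
  induction m with
  | zero => simp [newtonT]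
  | succ m ih =>
    rw [newtonT, transpose_sub, transpose_smul, transpose_one, transpose_mul, ih, hA, newtonT_comm]

/-- resolvent expansion -/
lemma newtonT_adj_mul {n : ℕ} (A : Matrix (Fin n) (Fin n) ℝ) (t : ℝ) (p : ℕ) (hp : p ≤ n) :
    (∑ m ∈ Finset.range p, ((-1 : ℝ) ^ m * t ^ (n - 1 - m)) • newtonT m A) *
        (t • (1 : Matrix (Fin n) (Fin n) ℝ) - A)
      = (∑ m ∈ Finset.range (p + 1), ((-1 : ℝ) ^ m * esymmMat m A * t ^ (n - m))) • 1
        - ((-1 : ℝ) ^ p * t ^ (n - p)) • newtonT p A := by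
  induction p with
  | zero =>
    have : esymmMat 0 A = 1 := by
      have := newtonT_closed A 0
      simp only [esymmMat, Nat.sub_zero, pow_zero, one_mul]
      have := Matrix.charpoly_monic A
      rw [Polynomial.Monic, Polynomial.leadingCoeff, Matrix.charpoly_natDegree_eq_dim,
        Fintype.card_fin] at this
      exact this
    simp [newtonT, this]
  | succ p ih =>
    rw [Finset.sum_range_succ, add_mul, ih (by omega), Finset.sum_range_succ _ (p + 1), newtonT]
    have e1 : n - p = n - (p + 1) + 1 := by omega
    have e2 : n - 1 - p = n - (p + 1) := by omega
    rw [e1, e2]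
    ext i j
    simp only [Matrix.add_apply, Matrix.sub_apply, Matrix.smul_apply, smul_eq_mul, mul_sub,
      smul_mul_assoc, mul_smul_comm, mul_one]
    ring

lemma poly_coeff_eq {N : ℕ} {a b : ℕ → ℝ}
    (S : Set ℝ) (hS : S.Infinite)
    (h : ∀ t ∈ S, ∑ m ∈ Finset.range N, a m * t ^ m = ∑ m ∈ Finset.range N, b m * t ^ m) :
    ∀ m < N, a m = b m := by
  have := Polynomial.eq_of_infinite_eval_eq
    (∑ m ∈ Finset.range N, Polynomial.C (a m) * Polynomial.X ^ m)
    (∑ m ∈ Finset.range N, Polynomial.C (b m) * Polynomial.X ^ m) (hS.mono fun t ht => by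
      simpa [Polynomial.eval_finsetSum] using h t ht)
  intro m hm
  have h2 := congrArg (fun p => Polynomial.coeff p m) this
  simpa [Polynomial.finsetSum_coeff, Polynomial.coeff_C_mul, Polynomial.coeff_X_pow, hm] using h2

lemma nonroot_infinite {n : ℕ} (A : Matrix (Fin n) (Fin n) ℝ) :
    {t : ℝ | (t • (1 : Matrix (Fin n) (Fin n) ℝ) - A).det ≠ 0}.Infinite := by
  have h1 : ∀ t : ℝ, (t • (1 : Matrix (Fin n) (Fin n) ℝ) - A).det = A.charpoly.eval t := by
    intro t
    rw [Matrix.eval_charpoly, Matrix.smul_one_eq_diagonal]; rfl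
  have h2 : {t : ℝ | A.charpoly.eval t = 0}.Finite := by
    have := Polynomial.finite_setOfPred_isRoot (Matrix.charpoly_monic A).ne_zero
    exact this
  have := h2.infinite_compl
  simpa [h1, Set.compl_def] using this

lemma adj_eq {n : ℕ} (A : Matrix (Fin n) (Fin n) ℝ) (t : ℝ)
    (ht : (t • (1 : Matrix (Fin n) (Fin n) ℝ) - A).det ≠ 0) :
    adjugate (t • (1 : Matrix (Fin n) (Fin n) ℝ) - A)
      = ∑ m ∈ Finset.range n, ((-1 : ℝ) ^ m * t ^ (n - 1 - m)) • newtonT m A := by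
  have h := newtonT_adj_mul A t n le_rfl
  rw [newtonT_top, smul_zero, sub_zero, ← det_expand, ← Matrix.adjugate_mul] at h
  have hu : IsUnit (t • (1 : Matrix (Fin n) (Fin n) ℝ) - A) := by
    rw [Matrix.isUnit_iff_isUnit_det]; exact isUnit_iff_ne_zero.2 ht
  exact (hu.mul_left_injective h).symm

lemma esymm_differentiable {n : ℕ} (m : ℕ) : ∃ f : MvPolynomial (Fin n × Fin n) ℝ,
    (m ≤ n → f.IsHomogeneous m) ∧
    ∀ A : Matrix (Fin n) (Fin n) ℝ, esymmMat m A = MvPolynomial.eval (fun p => A p.1 p.2) f := by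
  refine ⟨MvPolynomial.C ((-1 : ℝ) ^ m) * (Matrix.charpoly.univ ℝ (Fin n)).coeff (n - m), ?_, ?_⟩
  · intro hm
    have := Matrix.charpoly.univ_coeff_isHomogeneous ℝ (Fin n) (n - m) m (by simp; omega)
    simpa using (MvPolynomial.isHomogeneous_C _ ((-1 : ℝ) ^ m)).mul this
  · intro A
    have := Matrix.charpoly.univ_map_eval₂Hom (n := Fin n) (RingHom.id ℝ) (fun p => A p.1 p.2)
    rw [esymmMat]
    have h2 : A.charpoly = (Matrix.charpoly.univ ℝ (Fin n)).map
      (MvPolynomial.eval₂Hom (RingHom.id ℝ) (fun p => A p.1 p.2)) := by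
      rw [this]; rfl
    rw [h2, Polynomial.coeff_map]
    simp [MvPolynomial.eval₂_id, MvPolynomial.eval]

lemma mvpoly_contDiffAt {E ι : Type*} [NormedAddCommGroup E] [NormedSpace ℝ E] {N : WithTop ℕ∞}
    (f : MvPolynomial ι ℝ) {g : E → ι → ℝ} {x : E} (hg : ∀ p, ContDiffAt ℝ N (fun y => g y p) x) :
    ContDiffAt ℝ N (fun y => MvPolynomial.eval (g y) f) x := by
  induction f using MvPolynomial.induction_on with
  | C a => simpa using contDiffAt_const
  | add p q hp hq => simpa using hp.add hq
  | mul_X p i hp => simpa using hp.mul (hg i)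

lemma esymm_contDiffAt {E : Type*} [NormedAddCommGroup E] [NormedSpace ℝ E] {N : WithTop ℕ∞}
    {n : ℕ} (m : ℕ) {A : E → Matrix (Fin n) (Fin n) ℝ} {x : E}
    (hA : ∀ i j, ContDiffAt ℝ N (fun y => A y i j) x) :
    ContDiffAt ℝ N (fun y => esymmMat m (A y)) x := by
  obtain ⟨f, -, hf⟩ := esymm_differentiable (n := n) m
  simp only [hf]
  exact mvpoly_contDiffAt f fun p => hA p.1 p.2

lemma newtonT_contDiffAt {E : Type*} [NormedAddCommGroup E] [NormedSpace ℝ E] {N : WithTop ℕ∞}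
    {n : ℕ} (m : ℕ) {A : E → Matrix (Fin n) (Fin n) ℝ} {x : E}
    (hA : ∀ i j, ContDiffAt ℝ N (fun y => A y i j) x) (i j : Fin n) :
    ContDiffAt ℝ N (fun y => newtonT m (A y) i j) x := by
  induction m generalizing i j with
  | zero => simpa [newtonT] using contDiffAt_const
  | succ m ih =>
    simp only [newtonT, Matrix.sub_apply, Matrix.smul_apply, Matrix.mul_apply, smul_eq_mul]
    exact ((esymm_contDiffAt _ hA).mul contDiffAt_const).sub
      (ContDiffAt.sum fun l _ => (ih i l).mul (hA l j))

lemma esymm_hasDerivAt {n : ℕ} {A : ℝ → Matrix (Fin n) (Fin n) ℝ} {A' : Matrix (Fin n) (Fin n) ℝ}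
    {s : ℝ} (hs : ∀ i j, ContDiffAt ℝ 1 (fun t => A t i j) s)
    (h : ∀ i j, HasDerivAt (fun t => A t i j) (A' i j) s) (m : ℕ) (hm : m < n) :
    HasDerivAt (fun t => esymmMat (m + 1) (A t)) (trace (newtonT m (A s) * A')) s := by
  have hd : ∀ m, HasDerivAt (fun t => esymmMat m (A t)) (deriv (fun t => esymmMat m (A t)) s) s :=
    fun m => ((esymm_contDiffAt m hs).differentiableAt (by simp)).hasDerivAt
  have h0 : deriv (fun t => esymmMat 0 (A t)) s = 0 := by
    have : (fun t => esymmMat 0 (A t)) = fun _ => 1 := by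
      funext t
      have := Matrix.charpoly_monic (A t)
      rw [Polynomial.Monic, Polynomial.leadingCoeff, Matrix.charpoly_natDegree_eq_dim,
        Fintype.card_fin] at this
      simp [esymmMat, this]
    rw [this]; simp
  have key : ∀ τ ∈ {t : ℝ | (t • (1 : Matrix (Fin n) (Fin n) ℝ) - A s).det ≠ 0},
      ∑ j ∈ Finset.range n, ((-1 : ℝ) ^ (n - 1 - j + 1) *
        deriv (fun t => esymmMat (n - 1 - j + 1) (A t)) s) * τ ^ j =
      ∑ j ∈ Finset.range n, ((-1 : ℝ) ^ (n - 1 - j + 1) *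
        trace (newtonT (n - 1 - j) (A s) * A')) * τ ^ j := by
    intro τ hτ
    have d1 : HasDerivAt (fun t => (τ • (1 : Matrix (Fin n) (Fin n) ℝ) - A t).det)
        (trace (adjugate (τ • (1 : Matrix (Fin n) (Fin n) ℝ) - A s) * (-A'))) s := by
      apply det_hasDerivAt
      intro i j
      simpa using (h i j).const_sub ((τ • (1 : Matrix (Fin n) (Fin n) ℝ)) i j)
    simp only [det_expand] at d1
    have d2 : HasDerivAt (fun t => ∑ m ∈ Finset.range (n + 1),
        (-1 : ℝ) ^ m * esymmMat m (A t) * τ ^ (n - m))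
        (∑ m ∈ Finset.range (n + 1),
        (-1 : ℝ) ^ m * deriv (fun t => esymmMat m (A t)) s * τ ^ (n - m)) s :=
      HasDerivAt.fun_sum fun m _ => ((hd m).const_mul _).mul_const _
    have e := d2.unique d1
    rw [Finset.sum_range_succ', h0, adj_eq _ _ hτ] at e
    simp only [mul_zero, zero_mul, add_zero] at e
    rw [Finset.sum_mul, Matrix.trace_sum] at e
    rw [← Finset.sum_range_reflect (fun j => (-1 : ℝ) ^ (j + 1) *
      deriv (fun t => esymmMat (j + 1) (A t)) s * τ ^ (n - (j + 1))) n,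
      ← Finset.sum_range_reflect (fun j => (((-1 : ℝ) ^ j * τ ^ (n - 1 - j)) •
        newtonT j (A s) * -A').trace) n] at e
    convert e using 1
    · refine Finset.sum_congr rfl fun j hj => ?_
      have := Finset.mem_range.1 hj
      congr 2
      omega
    · refine Finset.sum_congr rfl fun j hj => ?_
      have := Finset.mem_range.1 hj
      have e2 : n - 1 - (n - 1 - j) = j := by omega
      rw [e2, smul_mul_assoc, Matrix.trace_smul, mul_neg, Matrix.trace_neg, smul_eq_mul, pow_succ]
      ring
  have := poly_coeff_eq _ (nonroot_infinite (A s)) key (n - 1 - m) (by omega)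
  have e3 : n - 1 - (n - 1 - m) = m := by omega
  rw [e3] at this
  have := mul_left_cancel₀ (pow_ne_zero _ (by norm_num)) this
  rw [← this]
  exact hd (m + 1)

lemma esymm_rec {n : ℕ} (A : Matrix (Fin n) (Fin n) ℝ) (m : ℕ) (hm : m < n) :
    trace (newtonT m A * A) = ((m : ℝ) + 1) * esymmMat (m + 1) A := by
  have h1 := esymm_hasDerivAt (A := fun t => t • A) (A' := A) (s := 1)
    (fun i j => by simpa using contDiffAt_id.mul contDiffAt_const)
    (fun i j => by simpa using (hasDerivAt_id (1 : ℝ)).mul_const (A i j)) m hm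
  obtain ⟨f, hf1, hf⟩ := esymm_differentiable (n := n) (m + 1)
  have h2 : (fun t : ℝ => esymmMat (m + 1) (t • A)) = fun t => t ^ (m + 1) * esymmMat (m + 1) A := by
    funext t
    rw [hf, hf]
    rw [MvPolynomial.eval_eq, MvPolynomial.eval_eq, Finset.mul_sum]
    refine Finset.sum_congr rfl fun d hd => ?_
    have h4 : d.degree = m + 1 := by
      have := hf1 (by omega) (MvPolynomial.mem_support_iff.1 hd)
      rw [← this, Finsupp.degree_eq_weight_one]; rfl
    simp only [Matrix.smul_apply, smul_eq_mul, mul_pow, Finset.prod_mul_distrib]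
    rw [Finset.prod_pow_eq_pow_sum, ← Finsupp.degree_apply, h4]
    ring
  rw [h2] at h1
  have h3 := (hasDerivAt_pow (m + 1) (1 : ℝ)).mul_const (esymmMat (m + 1) A)
  have := h1.unique h3
  simpa using this

lemma newtonT_trace {n : ℕ} (A : Matrix (Fin n) (Fin n) ℝ) (m : ℕ) (hm : m ≤ n) :
    trace (newtonT m A) = ((n : ℝ) - m) * esymmMat m A := by
  cases m with
  | zero =>
    have := Matrix.charpoly_monic A
    rw [Polynomial.Monic, Polynomial.leadingCoeff, Matrix.charpoly_natDegree_eq_dim,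
      Fintype.card_fin] at this
    simp [esymmMat, this, newtonT]
  | succ m =>
    rw [newtonT, Matrix.trace_sub, esymm_rec A m (by omega), Matrix.trace_smul, Matrix.trace_one]
    simp; ring

lemma newton_bound (n m : ℕ) (hm : m ≤ n) : ∃ C : ℝ, 0 ≤ C ∧
    ∀ (A : Matrix (Fin n) (Fin n) ℝ) (a : ℝ), 0 ≤ a → (∀ i j, |A i j| ≤ a) →
      |esymmMat m A| ≤ C * a ^ m ∧ ∀ i j, |newtonT m A i j| ≤ C * a ^ m := by
  induction m with
  | zero =>
    refine ⟨1, zero_le_one, fun A a _ _ => ⟨?_, ?_⟩⟩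
    · have := Matrix.charpoly_monic A
      rw [Polynomial.Monic, Polynomial.leadingCoeff, Matrix.charpoly_natDegree_eq_dim,
        Fintype.card_fin] at this
      simp [esymmMat, this]
    · intro i j
      simp only [newtonT, Matrix.one_apply]
      split_ifs <;> simp
  | succ m ih =>
    obtain ⟨C, hC, h⟩ := ih (by omega)
    refine ⟨n * (n * C) + n * C, by positivity, fun A a ha hA => ?_⟩
    obtain ⟨-, h2⟩ := h A a ha hA
    have h3 : ∀ i j, |(newtonT m A * A) i j| ≤ n * C * a ^ (m + 1) := by
      intro i j
      rw [Matrix.mul_apply]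
      calc |∑ l, newtonT m A i l * A l j| ≤ ∑ l, |newtonT m A i l * A l j| :=
            Finset.abs_sum_le_sum_abs _ _
        _ ≤ ∑ l : Fin n, (C * a ^ m) * a := by
            refine Finset.sum_le_sum fun l _ => ?_
            rw [abs_mul]
            exact mul_le_mul (h2 i l) (hA l j) (abs_nonneg _) (by positivity)
        _ = n * C * a ^ (m + 1) := by simp; ring
    have h4 : |esymmMat (m + 1) A| ≤ n * (n * C) * a ^ (m + 1) := by
      have e := esymm_rec A m (by omega)
      have e2 : |trace (newtonT m A * A)| ≤ n * (n * C) * a ^ (m + 1) := by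
        calc |trace (newtonT m A * A)| ≤ ∑ i, |(newtonT m A * A) i i| :=
              Finset.abs_sum_le_sum_abs _ _
          _ ≤ ∑ i : Fin n, n * C * a ^ (m + 1) := Finset.sum_le_sum fun i _ => h3 i i
          _ = _ := by simp; ring
      rw [e, abs_mul] at e2
      have : 1 ≤ |(m : ℝ) + 1| := by rw [abs_of_nonneg (by positivity)]; simp
      nlinarith [abs_nonneg (esymmMat (m + 1) A)]
    refine ⟨h4.trans ?_, fun i j => ?_⟩
    · rw [add_mul]; have : 0 ≤ n * C * a ^ (m + 1) := by positivity
      linarith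
    · rw [newtonT, Matrix.sub_apply, Matrix.smul_apply, Matrix.one_apply, add_mul]
      refine (abs_sub _ _).trans (add_le_add ?_ (h3 i j))
      refine le_trans ?_ h4
      split_ifs <;> simp

end Algebra
/-! ### Partial derivatives and the divergence structure -/

section Divergence

lemma pd_contDiffAt {n : ℕ} {m N : WithTop ℕ∞} {w : (Fin n → ℝ) → ℝ} {x : Fin n → ℝ} (i : Fin n)
    (h : ContDiffAt ℝ N w x) (hm : m + 1 ≤ N) : ContDiffAt ℝ m (pd i w) x :=
  (h.fderiv_right hm).clm_apply contDiffAt_const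

lemma pd_eq_of_eventuallyEq {n : ℕ} {w v : (Fin n → ℝ) → ℝ} {x : Fin n → ℝ} (i : Fin n)
    (h : w =ᶠ[nhds x] v) : pd i w x = pd i v x := by
  rw [pd, pd, h.fderiv_eq]

lemma pd_comm {n : ℕ} {w : (Fin n → ℝ) → ℝ} {x : Fin n → ℝ} (i j : Fin n)
    (h : ContDiffAt ℝ 2 w x) : pd i (pd j w) x = pd j (pd i w) x := by
  have hd : DifferentiableAt ℝ (fderiv ℝ w) x :=
    (h.fderiv_right (m := 1) (by norm_num)).differentiableAt (by norm_num)
  have key : ∀ a b : Fin n, pd a (pd b w) x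
      = fderiv ℝ (fderiv ℝ w) x (Pi.single a 1) (Pi.single b 1) := by
    intro a b
    have h2 : HasFDerivAt (pd b w)
        ((ContinuousLinearMap.apply ℝ ℝ (Pi.single b 1 : Fin n → ℝ)).comp
          (fderiv ℝ (fderiv ℝ w) x)) x :=
      (ContinuousLinearMap.apply ℝ ℝ (Pi.single b 1 : Fin n → ℝ)).hasFDerivAt.comp x hd.hasFDerivAt
    rw [pd, h2.fderiv]; rfl
  rw [key, key]
  exact (h.isSymmSndFDerivAt (by simp)).eq _ _

lemma pd_hasDerivAt {n : ℕ} {w : (Fin n → ℝ) → ℝ} {x : Fin n → ℝ} (i : Fin n)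
    (h : DifferentiableAt ℝ w x) :
    HasDerivAt (fun t : ℝ => w (x + t • Pi.single i 1)) (pd i w x) 0 := by
  have h1 : HasDerivAt (fun t : ℝ => x + t • (Pi.single i 1 : Fin n → ℝ)) (Pi.single i 1) 0 := by
    simpa using ((hasDerivAt_id (0 : ℝ)).smul_const (Pi.single i 1 : Fin n → ℝ)).const_add x
  have h2 : HasFDerivAt w (fderiv ℝ w x) (x + (0 : ℝ) • (Pi.single i 1 : Fin n → ℝ)) := by
    simpa using h.hasFDerivAt
  exact h2.comp_hasDerivAt (0 : ℝ) h1

lemma pd_sum {n : ℕ} {ι : Type*} (s : Finset ι) {f : ι → (Fin n → ℝ) → ℝ} {x : Fin n → ℝ}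
    (i : Fin n) (h : ∀ a ∈ s, DifferentiableAt ℝ (f a) x) :
    pd i (fun y => ∑ a ∈ s, f a y) x = ∑ a ∈ s, pd i (f a) x := by
  simp only [pd]
  rw [fderiv_fun_sum h]
  simp

lemma pd_mul {n : ℕ} {f g : (Fin n → ℝ) → ℝ} {x : Fin n → ℝ}
    (i : Fin n) (hf : DifferentiableAt ℝ f x) (hg : DifferentiableAt ℝ g x) :
    pd i (fun y => f y * g y) x = pd i f x * g x + f x * pd i g x := by
  simp only [pd]
  rw [fderiv_fun_mul hf hg]
  simp; ring

lemma pd_sub {n : ℕ} {f g : (Fin n → ℝ) → ℝ} {x : Fin n → ℝ}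
    (i : Fin n) (hf : DifferentiableAt ℝ f x) (hg : DifferentiableAt ℝ g x) :
    pd i (fun y => f y - g y) x = pd i f x - pd i g x := by
  simp only [pd]
  rw [fderiv_fun_sub hf hg]
  simp

lemma pd_mul_const {n : ℕ} {f : (Fin n → ℝ) → ℝ} {x : Fin n → ℝ}
    (i : Fin n) (c : ℝ) (hf : DifferentiableAt ℝ f x) :
    pd i (fun y => f y * c) x = pd i f x * c := by
  simp only [pd]
  rw [fderiv_mul_const hf]
  simp; ring

lemma pd_esymm {n : ℕ} {A : (Fin n → ℝ) → Matrix (Fin n) (Fin n) ℝ} {x : Fin n → ℝ}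
    (hA : ∀ i j, ContDiffAt ℝ 1 (fun y => A y i j) x) (j : Fin n) (m : ℕ) (hm : m < n) :
    pd j (fun y => esymmMat (m + 1) (A y)) x
      = ∑ i, ∑ l, newtonT m (A x) i l * pd j (fun y => A y l i) x := by
  have h1 := pd_hasDerivAt j ((esymm_contDiffAt (m + 1) hA).differentiableAt (by simp))
  have h2 := esymm_hasDerivAt (A := fun t : ℝ => A (x + t • Pi.single j 1))
    (A' := Matrix.of fun a b => pd j (fun y => A y a b) x) (s := 0)
    (fun a b => by
      have : ContDiffAt ℝ 1 (fun t : ℝ => x + t • (Pi.single j 1 : Fin n → ℝ)) 0 := by fun_prop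
      refine ContDiffAt.comp (g := fun y => A y a b) (0 : ℝ) ?_ this
      simpa using hA a b)
    (fun a b => pd_hasDerivAt j ((hA a b).differentiableAt (by simp))) m hm
  have := h1.unique h2
  rw [this]
  simp [Matrix.trace, Matrix.mul_apply]

lemma div_newtonT {n : ℕ} {A : (Fin n → ℝ) → Matrix (Fin n) (Fin n) ℝ} {x : Fin n → ℝ}
    (hA : ∀ i j, ContDiffAt ℝ 1 (fun y => A y i j) x) (φ : Fin n → ℝ)
    (hcod : ∀ i l j, pd j (fun y => A y l i) x - pd i (fun y => A y l j) x
      = -φ j * (if l = i then 1 else 0) + φ i * (if l = j then 1 else 0))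
    (m : ℕ) (hm : m + 1 ≤ n) (j : Fin n) :
    ∑ i, pd i (fun y => newtonT (m + 1) (A y) i j) x
      = -((n : ℝ) - (m + 1)) * ∑ i, newtonT m (A x) i j * φ i := by
  have hAd : ∀ i j, DifferentiableAt ℝ (fun y => A y i j) x :=
    fun i j => (hA i j).differentiableAt (by simp)
  have hTd : ∀ m i j, DifferentiableAt ℝ (fun y => newtonT m (A y) i j) x :=
    fun m i j => (newtonT_contDiffAt m hA i j).differentiableAt (by simp)
  have hSd : ∀ m, DifferentiableAt ℝ (fun y => esymmMat m (A y)) x :=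
    fun m => (esymm_contDiffAt m hA).differentiableAt (by simp)
  induction m generalizing j with
  | zero => 
    have e : ∀ i, pd i (fun y => newtonT 1 (A y) i j) x
        = (if i = j then pd i (fun y => esymmMat 1 (A y)) x else 0)
          - pd i (fun y => A y i j) x := by
      intro i
      simp only [newtonT, Matrix.sub_apply, Matrix.smul_apply, one_mul, smul_eq_mul]
      rw [pd_sub i ((hSd 1).mul_const _) (hAd i j), pd_mul_const i _ (hSd 1), Matrix.one_apply]
      simp
    have e0 := pd_esymm hA j 0 (by omega)
    simp only [zero_add, e, Finset.sum_sub_distrib, Finset.sum_ite_eq', Finset.mem_univ, if_true]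
      at e0 ⊢
    rw [e0]
    simp only [newtonT, Matrix.one_apply, ite_mul, one_mul, zero_mul, Finset.sum_ite_eq,
      Finset.sum_ite_eq', Finset.mem_univ, if_true]
    rw [← Finset.sum_sub_distrib, Finset.sum_congr rfl fun i _ => hcod i i j]
    simp [Finset.sum_add_distrib]
    ring
  | succ m ih =>
    have e : ∀ i, pd i (fun y => newtonT (m + 1 + 1) (A y) i j) x
        = (if i = j then pd i (fun y => esymmMat (m + 1 + 1) (A y)) x else 0)
          - ∑ l, (pd i (fun y => newtonT (m + 1) (A y) i l) x * A x l j
            + newtonT (m + 1) (A x) i l * pd i (fun y => A y l j) x) := by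
      intro i
      rw [show (fun y => newtonT (m + 1 + 1) (A y) i j) = fun y => 
        esymmMat (m + 1 + 1) (A y) * (1 : Matrix (Fin n) (Fin n) ℝ) i j
          - ∑ l, newtonT (m + 1) (A y) i l * A y l j from by
        funext y; rw [newtonT, Matrix.sub_apply, Matrix.smul_apply, Matrix.mul_apply]; rfl]
      rw [pd_sub i ((hSd _).mul_const _) (DifferentiableAt.fun_sum fun l _ =>
          (hTd (m + 1) i l).fun_mul (hAd l j)), pd_mul_const i _ (hSd _),
        pd_sum _ i (fun l _ => (hTd (m + 1) i l).fun_mul (hAd l j)), Matrix.one_apply]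
      congr 1
      · simp
      · exact Finset.sum_congr rfl fun l _ => pd_mul i (hTd (m + 1) i l) (hAd l j)
    have e0 := pd_esymm hA j (m + 1) (by omega)
    simp only [e, Finset.sum_sub_distrib, Finset.sum_ite_eq', Finset.mem_univ, if_true]
    rw [e0]
    have e1 : ∑ i, ∑ l, (pd i (fun y => newtonT (m + 1) (A y) i l) x * A x l j
            + newtonT (m + 1) (A x) i l * pd i (fun y => A y l j) x)
        = -((n : ℝ) - (m + 1)) * ∑ i, (newtonT m (A x) * A x) i j * φ i
          + ∑ i, ∑ l, newtonT (m + 1) (A x) i l * pd i (fun y => A y l j) x := by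
      simp only [Finset.sum_add_distrib]
      congr 1
      rw [Finset.sum_comm]
      simp only [← Finset.sum_mul]
      rw [Finset.sum_congr rfl fun l _ => by rw [ih (by omega) l]]
      simp only [Matrix.mul_apply, Finset.mul_sum, Finset.sum_mul]
      rw [Finset.sum_comm]
      refine Finset.sum_congr rfl fun i _ => Finset.sum_congr rfl fun l _ => by ring
    rw [e1]
    have e2 : newtonT m (A x) * A x = esymmMat (m + 1) (A x) • 1 - newtonT (m + 1) (A x) := by
      rw [newtonT]; simp
    have e3 : ∑ i, ∑ l, newtonT (m + 1) (A x) i l * pd j (fun y => A y l i) x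
        = ∑ i, ∑ l, newtonT (m + 1) (A x) i l * pd i (fun y => A y l j) x
          + (- φ j * trace (newtonT (m + 1) (A x)) + ∑ i, newtonT (m + 1) (A x) i j * φ i) := by
      have : ∀ i l, newtonT (m + 1) (A x) i l * pd j (fun y => A y l i) x
          = newtonT (m + 1) (A x) i l * pd i (fun y => A y l j) x +
            (newtonT (m + 1) (A x) i l * (-φ j * (if l = i then 1 else 0)) +
              newtonT (m + 1) (A x) i l * (φ i * (if l = j then 1 else 0))) := by
        intro i l
        have := hcod i l j
        rw [sub_eq_iff_eq_add] at this
        rw [this]; ring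
      simp only [this, Finset.sum_add_distrib]
      congr 2
      · simp [Matrix.trace, Finset.mul_sum]
        exact Finset.sum_congr rfl fun i _ => by ring
      · simp
    rw [e3, e2, newtonT_trace _ _ (by omega)]
    have e4 : ∑ i, (esymmMat (m + 1) (A x) • (1 : Matrix (Fin n) (Fin n) ℝ)
          - newtonT (m + 1) (A x)) i j * φ i
        = esymmMat (m + 1) (A x) * φ j - ∑ i, newtonT (m + 1) (A x) i j * φ i := by
      simp [Matrix.sub_apply, sub_mul, Finset.sum_sub_distrib, Matrix.one_apply]
    rw [e4]
    push_cast
    ring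

lemma hess_codazzi {n : ℕ} {u φ : (Fin n → ℝ) → ℝ} {x : Fin n → ℝ}
    (hu : ContDiffAt ℝ 3 u x) (hφ : ContDiffAt ℝ 1 φ x) (i l j : Fin n) :
    pd j (fun y => (hess u y - φ y • (1 : Matrix (Fin n) (Fin n) ℝ)) l i) x
      - pd i (fun y => (hess u y - φ y • (1 : Matrix (Fin n) (Fin n) ℝ)) l j) x
    = -pd j φ x * (if l = i then 1 else 0) + pd i φ x * (if l = j then 1 else 0) := by
  have hφd := hφ.differentiableAt (by simp)
  have h2 : ∀ a, ContDiffAt ℝ 2 (pd a u) x := fun a => pd_contDiffAt a hu (by norm_num)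
  have h1 : ∀ a b, ContDiffAt ℝ 1 (pd b (pd a u)) x := fun a b =>
    pd_contDiffAt b (h2 a) (by norm_num)
  have h1d : ∀ a b, DifferentiableAt ℝ (pd b (pd a u)) x := fun a b =>
    (h1 a b).differentiableAt (by simp)
  have e : ∀ a b c, pd a (fun y => (hess u y - φ y • (1 : Matrix (Fin n) (Fin n) ℝ)) b c) x
      = pd a (pd b (pd c u)) x - pd a φ x * (if b = c then 1 else 0) := by
    intro a b c
    simp only [hess, Matrix.sub_apply, Matrix.smul_apply, Matrix.of_apply, smul_eq_mul]
    rw [pd_sub a (h1d c b) (hφd.mul_const _), pd_mul_const a _ hφd, Matrix.one_apply]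
  have hev : pd j (pd i u) =ᶠ[nhds x] pd i (pd j u) := by
    have := (hu.of_le (show (2 : WithTop ℕ∞) ≤ 3 by norm_num)).eventually (by simp)
    filter_upwards [this] with y hy
    exact pd_comm j i hy
  have e2 : pd j (pd l (pd i u)) x = pd i (pd l (pd j u)) x := by
    rw [pd_comm j l (h2 i), pd_eq_of_eventuallyEq l hev, pd_comm l i (h2 j)]
  rw [e, e, e2]
  ring

end Divergence
/-! ### Integration by parts -/

section IBP

lemma posPart_hasDerivAt {q : ℝ} (hq : 1 < q) (t : ℝ) :
    HasDerivAt (fun t : ℝ => (max t 0) ^ q) (q * (max t 0) ^ (q - 1)) t := by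
  rcases lt_trichotomy t 0 with ht | ht | ht
  · have h1 : (fun t : ℝ => (max t 0) ^ q) =ᶠ[nhds t] fun _ => 0 := by
      filter_upwards [gt_mem_nhds ht] with s hs
      rw [max_eq_right hs.le, Real.zero_rpow (by linarith)]
    have h2 : q * (max t 0) ^ (q - 1) = 0 := by
      rw [max_eq_right ht.le, Real.zero_rpow (by linarith), mul_zero]
    rw [h2]
    exact (hasDerivAt_const t (0 : ℝ)).congr_of_eventuallyEq h1
  · subst ht
    have h0 := hasDerivAt_abs_rpow 0 hq
    rw [hasDerivAt_iff_isLittleO] at h0 ⊢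
    have hq1 : q - 1 ≠ 0 := by linarith
    have hq0 : q ≠ 0 := by linarith
    simp only [max_self, abs_zero, Real.zero_rpow hq1, Real.zero_rpow hq0, mul_zero, smul_zero,
      sub_zero] at h0 ⊢
    refine Asymptotics.IsBigO.trans_isLittleO ?_ h0
    refine Asymptotics.isBigO_of_le _ fun s => ?_
    rw [Real.norm_of_nonneg (by positivity), Real.norm_of_nonneg (by positivity)]
    exact Real.rpow_le_rpow (by positivity) (max_le (le_abs_self s) (abs_nonneg s)) (by linarith)
  · have h1 : (fun t : ℝ => (max t 0) ^ q) =ᶠ[nhds t] fun s => s ^ q := by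
      filter_upwards [lt_mem_nhds ht] with s hs
      rw [max_eq_left hs.le]
    rw [max_eq_left ht.le]
    exact (Real.hasDerivAt_rpow_const (Or.inl ht.ne')).congr_of_eventuallyEq h1

lemma posPart_continuous {q : ℝ} (hq : 0 ≤ q) : Continuous (fun t : ℝ => (max t 0) ^ q) :=
  (continuous_id.max continuous_const).rpow_const fun _ => Or.inr hq

lemma posPart_contDiff {q : ℝ} (hq : 1 < q) : ContDiff ℝ 1 (fun t : ℝ => (max t 0) ^ q) := by
  rw [contDiff_one_iff_deriv]
  refine ⟨fun t => (posPart_hasDerivAt hq t).differentiableAt, ?_⟩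
  have : deriv (fun t : ℝ => (max t 0) ^ q) = fun t => q * (max t 0) ^ (q - 1) :=
    funext fun t => (posPart_hasDerivAt hq t).deriv
  rw [this]
  exact continuous_const.mul (posPart_continuous (by linarith))

lemma pd_posPart {n : ℕ} {V : (Fin n → ℝ) → ℝ} {x : Fin n → ℝ} {q : ℝ} (hq : 1 < q)
    (hV : DifferentiableAt ℝ V x) (j : Fin n) :
    pd j (fun y => (max (V y) 0) ^ q) x = q * (max (V x) 0) ^ (q - 1) * pd j V x := by
  have := (posPart_hasDerivAt hq (V x)).comp_hasFDerivAt x hV.hasFDerivAt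
  rw [pd, HasFDerivAt.fderiv (f := fun y => (max (V y) 0) ^ q) this]
  rfl

lemma ae_ball_of_closedBall {n : ℕ} (x₀ : Fin n → ℝ) {r : ℝ} (hr : 0 < r) :
    ∀ᵐ x : Fin n → ℝ, x ∈ closedBall x₀ r → x ∈ ball x₀ r := by
  have h : volume (sphere x₀ r) = 0 := Measure.addHaar_sphere_of_ne_zero _ _ hr.ne'
  have := compl_mem_ae_iff.2 h
  filter_upwards [this] with x hx hx2
  rcases lt_or_eq_of_le (mem_closedBall.1 hx2) with h1 | h1
  · exact h1
  · exact absurd h1 hx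

lemma ibp_scalar {n : ℕ} {x₀ : Fin n → ℝ} {r : ℝ} (hr : 0 < r) {g b D : (Fin n → ℝ) → ℝ}
    (hg : ContDiff ℝ 1 g) (hg0 : ∀ x, x ∉ ball x₀ r → g x = 0) {L : NNReal}
    (hb : LipschitzOnWith L b (closedBall x₀ r)) (j : Fin n)
    (hD : ∀ x ∈ ball x₀ r, |lineDeriv ℝ b x (Pi.single j 1)| ≤ D x)
    (hDg : IntegrableOn (fun x => D x * |g x|) (ball x₀ r)) :
    |∫ x in ball x₀ r, b x * pd j g x| ≤ ∫ x in ball x₀ r, D x * |g x| := by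
  obtain ⟨B, hB, hBb⟩ := hb.extend_real
  have hcs : HasCompactSupport g := by
    refine HasCompactSupport.of_support_subset_isCompact (isCompact_closedBall x₀ r) ?_
    intro x hx
    by_contra h
    exact hx (hg0 x fun h2 => h (ball_subset_closedBall h2))
  obtain ⟨C, hC⟩ := hg.lipschitzWith_of_hasCompactSupport hcs (by simp)
  have key := hB.integral_lineDeriv_mul_eq (μ := volume) hC hcs (Pi.single j 1)
  have e1 : ∫ x in ball x₀ r, b x * pd j g x = - ∫ x, lineDeriv ℝ g x (-Pi.single j 1) * B x := by
    have e0 : ∫ x in ball x₀ r, lineDeriv ℝ g x (-Pi.single j 1) * B x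
        = ∫ x, lineDeriv ℝ g x (-Pi.single j 1) * B x := by
      refine setIntegral_eq_integral_of_ae_compl_eq_zero ?_
      filter_upwards [ae_ball_of_closedBall x₀ hr] with x hx hx2
      have hx3 : x ∈ (closedBall x₀ r)ᶜ := fun h => hx2 (hx h)
      have : g =ᶠ[nhds x] fun _ => 0 := by
        filter_upwards [isClosed_closedBall.isOpen_compl.mem_nhds hx3] with y hy
        exact hg0 y fun h2 => hy (ball_subset_closedBall h2)
      rw [((hg.differentiable (by simp)) x).lineDeriv_eq_fderiv, this.fderiv_eq]
      simp
    rw [← e0, ← integral_neg]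
    · refine setIntegral_congr_fun measurableSet_ball fun x hx => ?_
      rw [← hBb (ball_subset_closedBall hx),
        ((hg.differentiable (by simp)) x).lineDeriv_eq_fderiv, pd, map_neg]
      ring
  have e2 : ∫ x, lineDeriv ℝ B x (Pi.single j 1) * g x
      = ∫ x in ball x₀ r, lineDeriv ℝ B x (Pi.single j 1) * g x := by
    rw [← setIntegral_eq_integral_of_forall_compl_eq_zero (s := ball x₀ r)]
    intro x hx
    rw [hg0 x hx, mul_zero]
  rw [e1, ← key, e2, abs_neg]
  refine norm_integral_le_of_norm_le (f := fun x => lineDeriv ℝ B x (Pi.single j 1) * g x) hDg ?_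
  refine (ae_restrict_iff' measurableSet_ball).2 (Filter.Eventually.of_forall fun x hx => ?_)
  rw [Real.norm_eq_abs, abs_mul]
  refine mul_le_mul_of_nonneg_right ?_ (abs_nonneg _)
  have : lineDeriv ℝ B x (Pi.single j 1) = lineDeriv ℝ b x (Pi.single j 1) := by
    apply Filter.EventuallyEq.lineDeriv_eq
    filter_upwards [isOpen_ball.mem_nhds hx] with y hy
    exact (hBb (ball_subset_closedBall hy)).symm
  rw [this]
  exact hD x hx

lemma abs_comp_le_vnorm {n : ℕ} (ξ : Fin n → ℝ) (i : Fin n) : |ξ i| ≤ vnorm ξ := by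
  rw [vnorm, ← Real.sqrt_sq_eq_abs]
  exact Real.sqrt_le_sqrt (Finset.single_le_sum (f := fun i => ξ i ^ 2)
    (fun _ _ => sq_nonneg _) (Finset.mem_univ i))

lemma ibp_vector {n : ℕ} {x₀ : Fin n → ℝ} {r q : ℝ} (hr : 0 < r) (hq : 1 < q) {c KT Kβ : ℝ}
    (hc : 0 ≤ c) (hKT : 0 ≤ KT) (hKβ : 0 ≤ Kβ)
    {η V w : (Fin n → ℝ) → ℝ} {T : (Fin n → ℝ) → Matrix (Fin n) (Fin n) ℝ}
    {β : Fin n → (Fin n → ℝ) → ℝ} (p : ℕ)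
    (hη : ContDiff ℝ 1 η) (hη0 : ∀ x, x ∉ ball x₀ r → η x = 0)
    (hη1 : ∀ x, 0 ≤ η x ∧ η x ≤ 1) (hηg : ∀ x j, |pd j η x| ≤ c)
    (hV : ∀ x ∈ closedBall x₀ r, ContDiffAt ℝ 1 V x)
    (hT : ∀ x ∈ closedBall x₀ r, ∀ i j, ContDiffAt ℝ 1 (fun y => T y i j) x)
    {L : NNReal} (hβ : ∀ i, LipschitzOnWith L (β i) (closedBall x₀ r))
    (hw : ContinuousOn w (closedBall x₀ r)) (hw1 : ∀ x ∈ ball x₀ r, 1 ≤ w x)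
    (hTb : ∀ x ∈ ball x₀ r, ∀ i j, |T x i j| ≤ KT * w x ^ p)
    (hTd : ∀ x ∈ ball x₀ r, ∀ i, |∑ j, pd j (fun y => T y i j) x| ≤ KT * w x ^ (p + 1))
    (hβb : ∀ x ∈ ball x₀ r, ∀ i, |β i x| ≤ Kβ)
    (hβd : ∀ x ∈ ball x₀ r, ∀ i j, |lineDeriv ℝ (β i) x (Pi.single j 1)| ≤ Kβ * w x) :
    |∫ x in ball x₀ r, η x * (max (V x) 0) ^ (q - 1) * ∑ i, ∑ j, T x i j * β i x * pd j V x|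
      ≤ n ^ 2 * KT * Kβ * (2 + c) * ∫ x in ball x₀ r, (max (V x) 0) ^ q * w x ^ (p + 1) := by
  set B := ball x₀ r with hBdef
  set K := closedBall x₀ r with hKdef
  have hBK : B ⊆ K := ball_subset_closedBall
  have int : ∀ f : (Fin n → ℝ) → ℝ, ContinuousOn f K → IntegrableOn f B := fun f hf =>
    (hf.integrableOn_compact (isCompact_closedBall x₀ r)).mono_set hBK
  -- continuity facts
  have cη : ContinuousOn η K := hη.continuous.continuousOn
  have cηd : ∀ j, ContinuousOn (pd j η) K := fun j x _ =>
    (pd_contDiffAt (m := 0) j hη.contDiffAt (by simp)).continuousAt.continuousWithinAt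
  have cV : ContinuousOn V K := fun x hx => (hV x hx).continuousAt.continuousWithinAt
  have cVd : ∀ j, ContinuousOn (pd j V) K := fun j x hx =>
    (pd_contDiffAt (m := 0) j (hV x hx) (by simp)).continuousAt.continuousWithinAt
  have cT : ∀ i j, ContinuousOn (fun y => T y i j) K := fun i j x hx =>
    (hT x hx i j).continuousAt.continuousWithinAt
  have cTd : ∀ i j, ContinuousOn (pd j (fun y => T y i j)) K := fun i j x hx =>
    (pd_contDiffAt (m := 0) j (hT x hx i j) (by simp)).continuousAt.continuousWithinAt
  have cβ : ∀ i, ContinuousOn (β i) K := fun i => (hβ i).continuousOn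
  have ca : ∀ s : ℝ, 0 ≤ s → ContinuousOn (fun x => (max (V x) 0) ^ s) K := fun s hs =>
    (posPart_continuous hs).comp_continuousOn cV
  -- the test functions
  set g : Fin n → Fin n → (Fin n → ℝ) → ℝ := fun i j x =>
    η x * (T x i j * (max (V x) 0) ^ q) with hg
  have hfd : ∀ x ∈ K, ContDiffAt ℝ 1 (fun y => (max (V y) 0) ^ q) x := fun x hx =>
    (posPart_contDiff hq).contDiffAt.comp x (hV x hx)
  have hgd : ∀ i j, ContDiff ℝ 1 (g i j) := by
    intro i j
    rw [contDiff_iff_contDiffAt]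
    intro x
    by_cases hx : x ∈ K
    · exact hη.contDiffAt.mul ((hT x hx i j).mul (hfd x hx))
    · have : g i j =ᶠ[nhds x] fun _ => 0 := by
        filter_upwards [isClosed_closedBall.isOpen_compl.mem_nhds hx] with y hy
        rw [hg]
        simp only
        rw [hη0 y fun h2 => hy (hBK h2), zero_mul]
      exact contDiffAt_const.congr_of_eventuallyEq this
  have hg0 : ∀ i j x, x ∉ B → g i j x = 0 := by
    intro i j x hx
    rw [hg]; simp only
    rw [hη0 x hx, zero_mul]
  have cg : ∀ i j, ContinuousOn (g i j) K := fun i j => (hgd i j).continuous.continuousOn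
  have cgd : ∀ i j, ContinuousOn (pd j (g i j)) K := fun i j x hx =>
    (pd_contDiffAt (m := 0) j (hgd i j).contDiffAt (by simp)).continuousAt.continuousWithinAt
  have cw : ContinuousOn (fun x => (max (V x) 0) ^ q * w x ^ (p + 1)) K :=
    (ca q (by linarith)).mul (hw.pow _)
  set J := ∫ x in B, (max (V x) 0) ^ q * w x ^ (p + 1) with hJ
  have hgb : ∀ x ∈ B, ∀ i j, |g i j x| ≤ KT * w x ^ p * (max (V x) 0) ^ q := by
    intro x hx i j
    rw [hg]; simp only
    have hf0 : 0 ≤ (max (V x) 0) ^ q := by positivity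
    rw [abs_mul, abs_mul, abs_of_nonneg (hη1 x).1, abs_of_nonneg hf0]
    calc η x * (|T x i j| * (max (V x) 0) ^ q) ≤ 1 * (|T x i j| * (max (V x) 0) ^ q) := by
          apply mul_le_mul_of_nonneg_right (hη1 x).2; positivity
      _ ≤ _ := by rw [one_mul]; exact mul_le_mul_of_nonneg_right (hTb x hx i j) hf0
  have I1 : ∀ i j, |∫ x in B, β i x * pd j (g i j) x| ≤ KT * Kβ * J := by
    intro i j
    refine (ibp_scalar hr (hgd i j) (hg0 i j) (hβ i) j (D := fun x => Kβ * w x)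
      (fun x hx => hβd x hx i j) (int _ ((continuousOn_const.mul hw).mul (cg i j).abs))).trans ?_
    rw [hJ, ← integral_const_mul]
    refine setIntegral_mono_on (int _ ((continuousOn_const.mul hw).mul (cg i j).abs))
      (int _ (continuousOn_const.mul cw)) measurableSet_ball fun x hx => ?_
    have := hw1 x hx
    calc Kβ * w x * |g i j x| ≤ Kβ * w x * (KT * w x ^ p * (max (V x) 0) ^ q) :=
          mul_le_mul_of_nonneg_left (hgb x hx i j) (by positivity)
      _ = _ := by rw [pow_succ]; ring
  -- remainder
  set rest : (Fin n → ℝ) → ℝ := fun x => (∑ i, ∑ j, β i x * pd j η x * T x i j) * (max (V x) 0) ^ q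
    + η x * (∑ i, β i x * ∑ j, pd j (fun y => T y i j) x) * (max (V x) 0) ^ q with hrest
  have crest : ContinuousOn rest K := by
    have := ca q (by linarith)
    refine ContinuousOn.add (ContinuousOn.mul ?_ this) (ContinuousOn.mul (cη.mul ?_) this)
    · exact continuousOn_finsetSum _ fun i _ => continuousOn_finsetSum _ fun j _ =>
        ((cβ i).mul (cηd j)).mul (cT i j)
    · exact continuousOn_finsetSum _ fun i _ => (cβ i).mul
        (continuousOn_finsetSum _ fun j _ => cTd i j)
  have I2 : |∫ x in B, rest x| ≤ (n ^ 2 * KT * Kβ * (1 + c)) * J := by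
    rw [hJ, ← integral_const_mul]
    refine norm_integral_le_of_norm_le (f := rest) (int _ (continuousOn_const.mul cw)) ?_
    refine (ae_restrict_iff' measurableSet_ball).2 (Filter.Eventually.of_forall fun x hx => ?_)
    have hwx := hw1 x hx
    have hf0 : 0 ≤ (max (V x) 0) ^ q := by positivity
    have b1 : |∑ i, ∑ j, β i x * pd j η x * T x i j| ≤ n ^ 2 * (Kβ * c * (KT * w x ^ (p + 1))) := by
      calc |∑ i, ∑ j, β i x * pd j η x * T x i j|
          ≤ ∑ i, ∑ j, |β i x * pd j η x * T x i j| :=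
            (Finset.abs_sum_le_sum_abs _ _).trans
              (Finset.sum_le_sum fun i _ => Finset.abs_sum_le_sum_abs _ _)
        _ ≤ ∑ i : Fin n, ∑ j : Fin n, Kβ * c * (KT * w x ^ (p + 1)) := by
            refine Finset.sum_le_sum fun i _ => Finset.sum_le_sum fun j _ => ?_
            rw [abs_mul, abs_mul]
            have h1 : w x ^ p ≤ w x ^ (p + 1) := pow_le_pow_right₀ hwx (by omega)
            have h2 := hβb x hx i
            have h3 := hηg x j
            have h4 := hTb x hx i j
            gcongr
            exact h4.trans (by gcongr)
        _ = _ := by simp; ring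
    have b2 : |η x * ∑ i, β i x * ∑ j, pd j (fun y => T y i j) x|
        ≤ n ^ 2 * (Kβ * (KT * w x ^ (p + 1))) := by
      rw [abs_mul, abs_of_nonneg (hη1 x).1]
      have : |∑ i, β i x * ∑ j, pd j (fun y => T y i j) x| ≤ n ^ 2 * (Kβ * (KT * w x ^ (p + 1))) := by
        calc |∑ i, β i x * ∑ j, pd j (fun y => T y i j) x|
            ≤ ∑ i, |β i x * ∑ j, pd j (fun y => T y i j) x| := Finset.abs_sum_le_sum_abs _ _
          _ ≤ ∑ i : Fin n, Kβ * (KT * w x ^ (p + 1)) := by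
              refine Finset.sum_le_sum fun i _ => ?_
              rw [abs_mul]
              have h2 := hβb x hx i
              have h4 := hTd x hx i
              gcongr
          _ = n * (Kβ * (KT * w x ^ (p + 1))) := by simp
          _ ≤ _ := by
              have : (n : ℝ) ≤ n ^ 2 := by exact_mod_cast Nat.le_self_pow (by norm_num) n
              gcongr
      calc _ ≤ 1 * |∑ i, β i x * ∑ j, pd j (fun y => T y i j) x| := by
            gcongr; exact (hη1 x).2
        _ ≤ _ := by rw [one_mul]; exact this
    rw [Real.norm_eq_abs, hrest]
    simp only
    rw [← add_mul, abs_mul, abs_of_nonneg hf0]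
    calc _ ≤ (n ^ 2 * (Kβ * c * (KT * w x ^ (p + 1))) + n ^ 2 * (Kβ * (KT * w x ^ (p + 1)))) *
          (max (V x) 0) ^ q :=
          mul_le_mul_of_nonneg_right ((abs_add_le _ _).trans (add_le_add b1 b2)) hf0
      _ = _ := by ring
  -- combine
  have hid : ∀ x ∈ B, q * (η x * (max (V x) 0) ^ (q - 1) * ∑ i, ∑ j, T x i j * β i x * pd j V x)
      = (∑ i, ∑ j, β i x * pd j (g i j) x) - rest x := by
    intro x hx
    have hxK := hBK hx
    have e : ∀ i j, pd j (g i j) x = pd j η x * (T x i j * (max (V x) 0) ^ q)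
        + η x * (pd j (fun y => T y i j) x * (max (V x) 0) ^ q
          + T x i j * (q * (max (V x) 0) ^ (q - 1) * pd j V x)) := by
      intro i j
      have d1 := hη.contDiffAt.differentiableAt (x := x) (by simp)
      have d2 := (hT x hxK i j).differentiableAt (by simp)
      have d3 := (hfd x hxK).differentiableAt (by simp)
      rw [hg]; simp only
      rw [pd_mul j d1 (d2.fun_mul d3), pd_mul j d2 d3,
        pd_posPart hq ((hV x hxK).differentiableAt (by simp))]
    rw [hrest]
    simp only [e, Finset.mul_sum, Finset.sum_mul]
    rw [eq_sub_iff_add_eq]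
    simp only [← Finset.sum_add_distrib]
    refine Finset.sum_congr rfl fun i _ => Finset.sum_congr rfl fun j _ => ?_
    ring
  have hI : q * ∫ x in B, η x * (max (V x) 0) ^ (q - 1) * ∑ i, ∑ j, T x i j * β i x * pd j V x
      = (∑ i, ∑ j, ∫ x in B, β i x * pd j (g i j) x) - ∫ x in B, rest x := by
    rw [← integral_const_mul, setIntegral_congr_fun measurableSet_ball hid, integral_sub,
      integral_finsetSum]
    · congr 1
      refine Finset.sum_congr rfl fun i _ => ?_
      rw [integral_finsetSum]
      exact fun j _ => int _ ((cβ i).mul (cgd i j))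
    · exact fun i _ => integrable_finsetSum _ fun j _ => int _ ((cβ i).mul (cgd i j))
    · exact integrable_finsetSum _ fun i _ => 
        integrable_finsetSum _ fun j _ => int _ ((cβ i).mul (cgd i j))
    · exact int _ crest
  have hfin : |q * ∫ x in B, η x * (max (V x) 0) ^ (q - 1) *
      ∑ i, ∑ j, T x i j * β i x * pd j V x| ≤ n ^ 2 * KT * Kβ * (2 + c) * J := by
    rw [hI]
    calc _ ≤ |∑ i, ∑ j, ∫ x in B, β i x * pd j (g i j) x| + |∫ x in B, rest x| := abs_sub _ _
      _ ≤ (∑ i : Fin n, ∑ j : Fin n, KT * Kβ * J) + (n ^ 2 * KT * Kβ * (1 + c)) * J := by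
          refine add_le_add ?_ I2
          exact (Finset.abs_sum_le_sum_abs _ _).trans (Finset.sum_le_sum fun i _ =>
            (Finset.abs_sum_le_sum_abs _ _).trans (Finset.sum_le_sum fun j _ => I1 i j))
      _ = _ := by simp; ring
  refine le_trans ?_ hfin
  rw [abs_mul, abs_of_pos (show 0 < q by linarith)]
  exact le_mul_of_one_le_left (abs_nonneg _) hq.le

end IBP
/-! ### The nonlinearity and jets -/

section Jets

/-- Compact convex set of relevant jets. -/
def jetSet {n : ℕ} (x₀ : Fin n → ℝ) (R M : ℝ) : Set ((Fin n → ℝ) × ℝ × (Fin n → ℝ)) :=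
  closedBall x₀ (2 * R) ×ˢ (closedBall (0 : ℝ) M ×ˢ closedBall (0 : Fin n → ℝ) M)

/-- Quantitative `C^{1,1}` bounds. -/
def GoodH {n : ℕ} (G : ((Fin n → ℝ) × ℝ × (Fin n → ℝ)) → ℝ)
    (S : Set ((Fin n → ℝ) × ℝ × (Fin n → ℝ))) (Λ : ℝ) : Prop :=
  0 ≤ Λ ∧ ∀ P ∈ S, ContDiffAt ℝ 1 G P ∧ |G P| ≤ Λ ∧ ‖fderiv ℝ G P‖ ≤ Λ ∧
    ∀ Q ∈ S, ‖fderiv ℝ G P - fderiv ℝ G Q‖ ≤ Λ * ‖P - Q‖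

lemma jetSet_convex {n : ℕ} (x₀ : Fin n → ℝ) (R M : ℝ) : Convex ℝ (jetSet x₀ R M) :=
  (convex_closedBall _ _).prod ((convex_closedBall _ _).prod (convex_closedBall _ _))

lemma jetSet_compact {n : ℕ} (x₀ : Fin n → ℝ) (R M : ℝ) : IsCompact (jetSet x₀ R M) :=
  (isCompact_closedBall _ _).prod ((isCompact_closedBall _ _).prod (isCompact_closedBall _ _))

lemma exists_goodH {n : ℕ} {Ω : Set (Fin n → ℝ)} (hΩ : IsOpen Ω)
    {G : ((Fin n → ℝ) × ℝ × (Fin n → ℝ)) → ℝ}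
    (hG : C11On G (Ω ×ˢ ((univ : Set ℝ) ×ˢ (univ : Set (Fin n → ℝ)))))
    {x₀ : Fin n → ℝ} {R : ℝ} (hR : 0 < R) (hball : closure (ball x₀ (2 * R)) ⊆ Ω) (M : ℝ) :
    ∃ Λ, GoodH G (jetSet x₀ R M) Λ := by
  set U := Ω ×ˢ ((univ : Set ℝ) ×ˢ (univ : Set (Fin n → ℝ))) with hU
  have hUo : IsOpen U := hΩ.prod (isOpen_univ.prod isOpen_univ)
  have hsub : jetSet x₀ R M ⊆ U := by
    intro P hP
    refine ⟨hball ?_, mem_univ _, mem_univ _⟩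
    rw [closure_ball x₀ (by linarith : 2 * R ≠ 0)]
    exact hP.1
  have hfw : ∀ P ∈ U, fderivWithin ℝ G U P = fderiv ℝ G P := fun P hP =>
    fderivWithin_of_isOpen hUo hP
  have hcd : ∀ P ∈ U, ContDiffAt ℝ 1 G P := fun P hP => hG.1.contDiffAt (hUo.mem_nhds hP)
  have hll : LocallyLipschitzOn (jetSet x₀ R M) (fderiv ℝ G) := by
    intro P hP
    obtain ⟨K, t, ht, hL⟩ := hG.2 P (hsub hP)
    rw [hUo.nhdsWithin_eq (hsub hP)] at ht
    refine ⟨K, t ∩ U, mem_nhdsWithin_of_mem_nhds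
      (Filter.inter_mem ht (hUo.mem_nhds (hsub hP))), ?_⟩
    intro a ha b hb
    rw [← hfw a ha.2, ← hfw b hb.2]
    exact hL ha.1 hb.1
  obtain ⟨K, hK⟩ := hll.exists_lipschitzOnWith_of_compact (jetSet_compact x₀ R M)
  have c1 : ContinuousOn G (jetSet x₀ R M) := fun P hP =>
    (hcd P (hsub hP)).continuousAt.continuousWithinAt
  obtain ⟨C1, hC1⟩ := (jetSet_compact x₀ R M).exists_bound_of_continuousOn c1
  obtain ⟨C2, hC2⟩ := (jetSet_compact x₀ R M).exists_bound_of_continuousOn hK.continuousOn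
  refine ⟨max (K : ℝ) (max C1 C2), le_max_of_le_left K.2, fun P hP => ⟨hcd P (hsub hP), ?_, ?_, ?_⟩⟩
  · exact (hC1 P hP).trans ((le_max_left _ _).trans (le_max_right _ _))
  · exact (hC2 P hP).trans ((le_max_right _ _).trans (le_max_right _ _))
  · intro Q hQ
    refine (hK.norm_sub_le hP hQ).trans ?_
    exact mul_le_mul_of_nonneg_right (le_max_left _ _) (norm_nonneg _)

lemma GoodH.taylor {n : ℕ} {G : ((Fin n → ℝ) × ℝ × (Fin n → ℝ)) → ℝ}
    {S : Set ((Fin n → ℝ) × ℝ × (Fin n → ℝ))} {Λ : ℝ} (h : GoodH G S Λ) (hS : Convex ℝ S)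
    {P Q : (Fin n → ℝ) × ℝ × (Fin n → ℝ)} (hP : P ∈ S) (hQ : Q ∈ S) :
    |G Q - G P - fderiv ℝ G P (Q - P)| ≤ Λ * ‖Q - P‖ ^ 2 := by
  have hseg : segment ℝ P Q ⊆ S := hS.segment_subset hP hQ
  have := (convex_segment P Q).norm_image_sub_le_of_norm_hasFDerivWithin_le' (f := G)
    (f' := fderiv ℝ G) (φ := fderiv ℝ G P) (C := Λ * ‖Q - P‖) (x := P) (y := Q)
    (fun z hz => (((h.2 z (hseg hz)).1.differentiableAt (by simp)).hasFDerivAt).hasFDerivWithinAt)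
    (fun z hz => by
      refine ((h.2 z (hseg hz)).2.2.2 P hP).trans ?_
      refine mul_le_mul_of_nonneg_left ?_ h.1
      obtain ⟨t, ht, rfl⟩ := (segment_eq_image' ℝ P Q) ▸ hz
      simp only [add_sub_cancel_left, norm_smul, Real.norm_eq_abs, abs_of_nonneg ht.1]
      exact mul_le_of_le_one_left (norm_nonneg _) ht.2)
    (left_mem_segment _ _ _) (right_mem_segment _ _ _)
  rw [Real.norm_eq_abs] at this
  refine this.trans (le_of_eq (by ring))

lemma GoodH.lip {n : ℕ} {G : ((Fin n → ℝ) × ℝ × (Fin n → ℝ)) → ℝ}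
    {S : Set ((Fin n → ℝ) × ℝ × (Fin n → ℝ))} {Λ : ℝ} (h : GoodH G S Λ) (hS : Convex ℝ S)
    {P Q : (Fin n → ℝ) × ℝ × (Fin n → ℝ)} (hP : P ∈ S) (hQ : Q ∈ S) :
    |G P - G Q| ≤ Λ * ‖P - Q‖ :=
  hS.norm_image_sub_le_of_norm_hasFDerivWithin_le (f := G) (f' := fderiv ℝ G)
    (fun z hz => (((h.2 z hz).1.differentiableAt (by simp)).hasFDerivAt).hasFDerivWithinAt)
    (fun z hz => (h.2 z hz).2.2.1) hQ hP

/-- coefficient `b_i = ∂G/∂ξ_i`. -/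
noncomputable def bCoef {n : ℕ} (G : ((Fin n → ℝ) × ℝ × (Fin n → ℝ)) → ℝ) (i : Fin n)
    (P : (Fin n → ℝ) × ℝ × (Fin n → ℝ)) : ℝ := fderiv ℝ G P (0, 0, Pi.single i 1)

/-- coefficient `β_i = ∂G/∂x_i + ξ_i ∂G/∂z + G ∂G/∂ξ_i`. -/
noncomputable def betaCoef {n : ℕ} (G : ((Fin n → ℝ) × ℝ × (Fin n → ℝ)) → ℝ) (i : Fin n)
    (P : (Fin n → ℝ) × ℝ × (Fin n → ℝ)) : ℝ :=
  fderiv ℝ G P (Pi.single i 1, P.2.2 i, 0) + G P * bCoef G i P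

lemma norm_ei {n : ℕ} (i : Fin n) : ‖(Pi.single i 1 : Fin n → ℝ)‖ = 1 := by
  rw [Pi.norm_single]; simp

lemma bCoef_bound {n : ℕ} {G : ((Fin n → ℝ) × ℝ × (Fin n → ℝ)) → ℝ}
    {S : Set ((Fin n → ℝ) × ℝ × (Fin n → ℝ))} {Λ : ℝ} (h : GoodH G S Λ)
    {P : (Fin n → ℝ) × ℝ × (Fin n → ℝ)} (hP : P ∈ S) (i : Fin n) :
    |bCoef G i P| ≤ Λ ∧ ∀ Q ∈ S, |bCoef G i P - bCoef G i Q| ≤ Λ * ‖P - Q‖ := by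
  have hn : ‖((0, 0, Pi.single i 1) : (Fin n → ℝ) × ℝ × (Fin n → ℝ))‖ = 1 := by
    simp [Prod.norm_def, norm_ei]
  constructor
  · have := (fderiv ℝ G P).le_opNorm (0, 0, Pi.single i 1)
    rw [hn, mul_one] at this
    exact this.trans (h.2 P hP).2.2.1
  · intro Q hQ
    have := (fderiv ℝ G P - fderiv ℝ G Q).le_opNorm (0, 0, Pi.single i 1)
    rw [hn, mul_one] at this
    exact this.trans ((h.2 P hP).2.2.2 Q hQ)

lemma betaCoef_bound {n : ℕ} {G : ((Fin n → ℝ) × ℝ × (Fin n → ℝ)) → ℝ}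
    {x₀ : Fin n → ℝ} {R M : ℝ} (hM : 0 ≤ M) {Λ : ℝ} (h : GoodH G (jetSet x₀ R M) Λ)
    {P : (Fin n → ℝ) × ℝ × (Fin n → ℝ)} (hP : P ∈ jetSet x₀ R M) (i : Fin n) :
    |betaCoef G i P| ≤ Λ * (2 + M) + 2 * Λ ^ 2 ∧ ∀ Q ∈ jetSet x₀ R M,
      |betaCoef G i P - betaCoef G i Q| ≤ (Λ * (2 + M) + 2 * Λ ^ 2) * ‖P - Q‖ := by
  have hΛ := h.1
  have hξ : ∀ Q ∈ jetSet x₀ R M, |Q.2.2 i| ≤ M := by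
    intro Q hQ
    have h1 : ‖Q.2.2‖ ≤ M := by simpa using hQ.2.2
    exact (norm_le_pi_norm Q.2.2 i).trans h1
  have hn : ∀ c : ℝ, |c| ≤ M →
      ‖((Pi.single i 1, c, 0) : (Fin n → ℝ) × ℝ × (Fin n → ℝ))‖ ≤ 1 + M := by
    intro c hc
    simp only [Prod.norm_def, norm_ei, Real.norm_eq_abs, norm_zero]
    refine max_le (by linarith) (max_le (by linarith) (by linarith))
  obtain ⟨hb1, hb2⟩ := bCoef_bound h hP i
  have hGP := (h.2 P hP)
  have h1 : |fderiv ℝ G P (Pi.single i 1, P.2.2 i, 0)| ≤ Λ * (1 + M) :=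
    ((fderiv ℝ G P).le_opNorm _).trans
      (mul_le_mul hGP.2.2.1 (hn _ (hξ P hP)) (norm_nonneg _) hΛ)
  constructor
  · refine (abs_add_le _ _).trans ?_
    rw [abs_mul]
    have : |G P| * |bCoef G i P| ≤ Λ * Λ := mul_le_mul hGP.2.1 hb1 (abs_nonneg _) hΛ
    nlinarith
  · intro Q hQ
    have hbQ := (bCoef_bound h hQ i).1
    have e : betaCoef G i P - betaCoef G i Q
        = (fderiv ℝ G P - fderiv ℝ G Q) (Pi.single i 1, P.2.2 i, 0)
          + fderiv ℝ G Q (0, P.2.2 i - Q.2.2 i, 0)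
          + (G P * (bCoef G i P - bCoef G i Q) + (G P - G Q) * bCoef G i Q) := by
      have : ((0, P.2.2 i - Q.2.2 i, 0) : (Fin n → ℝ) × ℝ × (Fin n → ℝ))
          = (Pi.single i 1, P.2.2 i, 0) - (Pi.single i 1, Q.2.2 i, 0) := by simp
      rw [this, map_sub, betaCoef, betaCoef, ContinuousLinearMap.sub_apply]
      ring
    have t1 : |(fderiv ℝ G P - fderiv ℝ G Q) (Pi.single i 1, P.2.2 i, 0)|
        ≤ (Λ * ‖P - Q‖) * (1 + M) :=
      ((fderiv ℝ G P - fderiv ℝ G Q).le_opNorm _).trans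
        (mul_le_mul (hGP.2.2.2 Q hQ) (hn _ (hξ P hP)) (norm_nonneg _) (by positivity))
    have t2 : |fderiv ℝ G Q (0, P.2.2 i - Q.2.2 i, 0)| ≤ Λ * ‖P - Q‖ := by
      refine ((fderiv ℝ G Q).le_opNorm _).trans
        (mul_le_mul (h.2 Q hQ).2.2.1 ?_ (norm_nonneg _) hΛ)
      have h5 : |P.2.2 i - Q.2.2 i| ≤ ‖P - Q‖ := by
        have := norm_le_pi_norm (P - Q).2.2 i
        exact this.trans ((norm_snd_le _).trans (norm_snd_le _))
      simpa [Prod.norm_def] using h5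
    have t3 : |G P * (bCoef G i P - bCoef G i Q)| ≤ Λ * (Λ * ‖P - Q‖) := by
      rw [abs_mul]; exact mul_le_mul hGP.2.1 (hb2 Q hQ) (abs_nonneg _) hΛ
    have t4 : |(G P - G Q) * bCoef G i Q| ≤ (Λ * ‖P - Q‖) * Λ := by
      rw [abs_mul]
      exact mul_le_mul (h.lip (jetSet_convex _ _ _) hP hQ) hbQ (abs_nonneg _) (by positivity)
    rw [e]
    refine (abs_add_le _ _).trans ((add_le_add (abs_add_le _ _) (abs_add_le _ _)).trans ?_)
    nlinarith

/-- The 1-jet of `u`. -/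
noncomputable def jet {n : ℕ} (u : (Fin n → ℝ) → ℝ) (x : Fin n → ℝ) : (Fin n → ℝ) × ℝ × (Fin n → ℝ) :=
  (x, u x, grad u x)

lemma jet_contDiffAt {n : ℕ} {u : (Fin n → ℝ) → ℝ} {x : Fin n → ℝ} (hu : ContDiffAt ℝ 2 u x) :
    ContDiffAt ℝ 1 (jet u) x := by
  refine contDiffAt_id.prodMk ((hu.of_le (by norm_num)).prodMk ?_)
  rw [contDiffAt_pi]
  exact fun i => pd_contDiffAt i hu (by norm_num)

lemma jet_fderiv {n : ℕ} {u : (Fin n → ℝ) → ℝ} {x : Fin n → ℝ} (hu : ContDiffAt ℝ 2 u x)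
    (j : Fin n) : fderiv ℝ (jet u) x (Pi.single j 1)
      = (Pi.single j 1, pd j u x, fun m => pd j (pd m u) x) := by
  have h1 : HasFDerivAt u (fderiv ℝ u x) x := (hu.differentiableAt (by simp)).hasFDerivAt
  have h2 : ∀ m, HasFDerivAt (pd m u) (fderiv ℝ (pd m u) x) x := fun m =>
    ((pd_contDiffAt (m := 1) m hu (by norm_num)).differentiableAt (by simp)).hasFDerivAt
  have h3 : HasFDerivAt (grad u) (ContinuousLinearMap.pi fun m => fderiv ℝ (pd m u) x) x :=
    hasFDerivAt_pi.2 h2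
  have h4 : HasFDerivAt (jet u) ((ContinuousLinearMap.id ℝ (Fin n → ℝ)).prod
    ((fderiv ℝ u x).prod (ContinuousLinearMap.pi fun m => fderiv ℝ (pd m u) x))) x :=
    (hasFDerivAt_id x).prodMk (h1.prodMk h3)
  rw [h4.fderiv]
  rfl

lemma vec_decomp {n : ℕ} (L : ((Fin n → ℝ) × ℝ × (Fin n → ℝ)) →L[ℝ] ℝ) (v : Fin n → ℝ) (c : ℝ)
    (ξ : Fin n → ℝ) : L (v, c, ξ) = L (v, c, 0) + ∑ m, L (0, 0, Pi.single m 1) * ξ m := by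
  have h1 : ((v, c, ξ) : (Fin n → ℝ) × ℝ × (Fin n → ℝ)) = (v, c, 0) + (0, 0, ξ) := by simp
  have h2 : ((0, 0, ξ) : (Fin n → ℝ) × ℝ × (Fin n → ℝ))
      = ∑ m, ξ m • ((0, 0, Pi.single m 1) : (Fin n → ℝ) × ℝ × (Fin n → ℝ)) := by
    have h3 : ξ = ∑ m, ξ m • (Pi.single m 1 : Fin n → ℝ) := by
      funext i; simp [Finset.sum_apply, Pi.single_apply]
    ext i
    · simp [Prod.fst_sum]
    · simp [Prod.fst_sum, Prod.snd_sum]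
    · simp only [Prod.snd_sum, Prod.smul_snd]
      exact congrFun h3 i
  rw [h1, map_add, h2, map_sum]
  congr 1
  refine Finset.sum_congr rfl fun m _ => ?_
  rw [map_smul, smul_eq_mul, mul_comm]

/-- gradient of `φ = G(x,u,∇u)` -/
lemma pd_comp {n : ℕ} {G : ((Fin n → ℝ) × ℝ × (Fin n → ℝ)) → ℝ} {u : (Fin n → ℝ) → ℝ}
    {x : Fin n → ℝ} (hu : ContDiffAt ℝ 2 u x) (hG : ContDiffAt ℝ 1 G (jet u x)) (i : Fin n) :
    pd i (fun y => G (jet u y)) x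
      = fderiv ℝ G (jet u x) (Pi.single i 1, pd i u x, fun m => pd i (pd m u) x) := by
  have h1 := (hG.differentiableAt (by simp)).hasFDerivAt.comp x
    ((jet_contDiffAt hu).differentiableAt (by simp)).hasFDerivAt
  rw [pd, HasFDerivAt.fderiv (f := fun y => G (jet u y)) h1, ← jet_fderiv hu]
  rfl

lemma pd_comp_eq {n : ℕ} {G : ((Fin n → ℝ) × ℝ × (Fin n → ℝ)) → ℝ} {u : (Fin n → ℝ) → ℝ}
    {x : Fin n → ℝ} (hu : ContDiffAt ℝ 2 u x) (hG : ContDiffAt ℝ 1 G (jet u x)) (i : Fin n) :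
    pd i (fun y => G (jet u y)) x
      = betaCoef G i (jet u x) + ∑ m, bCoef G m (jet u x) *
          (hess u x - G (jet u x) • (1 : Matrix (Fin n) (Fin n) ℝ)) m i := by
  rw [pd_comp hu hG, vec_decomp, betaCoef]
  have : (jet u x).2.2 i = pd i u x := rfl
  rw [this]
  simp only [hess, Matrix.sub_apply, Matrix.of_apply, Matrix.smul_apply, Matrix.one_apply, mul_sub,
    Finset.sum_sub_distrib, smul_eq_mul, mul_ite, mul_one, mul_zero, Finset.sum_ite_eq',
    Finset.mem_univ, if_true]
  have e : ∀ m, pd i (pd m u) x = pd m (pd i u) x := fun m => pd_comm i m hu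
  simp only [e, bCoef]
  ring

lemma jet_mem {n : ℕ} {u : (Fin n → ℝ) → ℝ} {x₀ : Fin n → ℝ} {R M : ℝ}
    (hu : ∀ x ∈ ball x₀ (2 * R), |u x| + vnorm (grad u x) ≤ M) {x : Fin n → ℝ}
    (hx : x ∈ ball x₀ (2 * R)) : jet u x ∈ jetSet x₀ R M := by
  have h := hu x hx
  have h0 : 0 ≤ vnorm (grad u x) := Real.sqrt_nonneg _
  refine ⟨ball_subset_closedBall hx, ?_, ?_⟩
  · simp only [jet, mem_closedBall_zero_iff, Real.norm_eq_abs]; linarith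
  · simp only [jet, mem_closedBall_zero_iff]
    rw [pi_norm_le_iff_of_nonneg (by linarith [abs_nonneg (u x)])]
    intro i
    have := abs_comp_le_vnorm (grad u x) i
    rw [Real.norm_eq_abs]
    linarith [abs_nonneg (u x)]

lemma entry_le_matNorm {n : ℕ} (A : Matrix (Fin n) (Fin n) ℝ) (i j : Fin n) :
    |A i j| ≤ matNorm A := by
  have h := (LinearMap.toContinuousLinearMap (Matrix.toEuclideanLin A)).le_opNorm
    (EuclideanSpace.single j 1)
  rw [EuclideanSpace.norm_single, norm_one, mul_one] at h
  refine le_trans ?_ h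
  have h2 := PiLp.norm_apply_le (p := 2) ((LinearMap.toContinuousLinearMap (Matrix.toEuclideanLin A))
    (EuclideanSpace.single j 1)) i
  refine le_trans (le_of_eq ?_) h2
  simp [Matrix.toLpLin_apply]

/-- norm of derivative of jet -/
lemma jet_deriv_norm {n : ℕ} {u : (Fin n → ℝ) → ℝ} {x : Fin n → ℝ} {M w : ℝ} (hM : 0 ≤ M)
    (hw : 1 ≤ w) (hu1 : |u x| + vnorm (grad u x) ≤ M) (hu2 : matNorm (hess u x) ≤ w) (j : Fin n) :
    ‖((Pi.single j 1, pd j u x, fun m => pd j (pd m u) x) : (Fin n → ℝ) × ℝ × (Fin n → ℝ))‖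
      ≤ (1 + M) * w := by
  have h1 : w ≤ (1 + M) * w := by nlinarith
  have h2 : M ≤ (1 + M) * w := by nlinarith
  simp only [Prod.norm_def, norm_ei, Real.norm_eq_abs]
  refine max_le (hw.trans h1) (max_le ?_ ?_)
  · have := abs_comp_le_vnorm (grad u x) j
    have h3 : |pd j u x| ≤ vnorm (grad u x) := this
    linarith [abs_nonneg (u x)]
  · rw [pi_norm_le_iff_of_nonneg (by linarith)]
    intro m
    exact ((entry_le_matNorm (hess u x) j m).trans hu2).trans h1

lemma lineDeriv_comp_bound {n : ℕ} {B : ((Fin n → ℝ) × ℝ × (Fin n → ℝ)) → ℝ}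
    {S : Set ((Fin n → ℝ) × ℝ × (Fin n → ℝ))} {K : ℝ} (hK : 0 ≤ K)
    (hB : ∀ P ∈ S, ∀ Q ∈ S, |B P - B Q| ≤ K * ‖P - Q‖) {u : (Fin n → ℝ) → ℝ} {x : Fin n → ℝ}
    (hu : ContDiffAt ℝ 2 u x) (hS : ∀ᶠ y in nhds x, jet u y ∈ S) (j : Fin n) {D : ℝ}
    (hD : ‖((Pi.single j 1, pd j u x, fun m => pd j (pd m u) x) :
      (Fin n → ℝ) × ℝ × (Fin n → ℝ))‖ ≤ D) :
    |lineDeriv ℝ (fun y => B (jet u y)) x (Pi.single j 1)| ≤ K * D := by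
  have hD0 : 0 ≤ D := (norm_nonneg _).trans hD
  by_cases hl : LineDifferentiableAt ℝ (fun y => B (jet u y)) x (Pi.single j 1)
  · have h1 := hl.hasLineDerivAt.tendsto_slope_zero
    have h2 : HasLineDerivAt ℝ (jet u) (fderiv ℝ (jet u) x (Pi.single j 1)) x (Pi.single j 1) :=
      ((jet_contDiffAt hu).differentiableAt (by simp)).hasFDerivAt.hasLineDerivAt _
    have h3 := h2.tendsto_slope_zero
    rw [jet_fderiv hu] at h3
    have h4 := h3.norm.const_mul K
    have h5 := le_of_tendsto_of_tendsto h1.norm h4 ?_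
    · exact h5.trans (mul_le_mul_of_nonneg_left hD hK)
    · have h6 : Filter.Tendsto (fun t : ℝ => x + t • (Pi.single j 1 : Fin n → ℝ))
          (nhdsWithin 0 {0}ᶜ) (nhds x) := by
        have : Continuous (fun t : ℝ => x + t • (Pi.single j 1 : Fin n → ℝ)) := by fun_prop
        have h7 := this.tendsto 0
        simp only [zero_smul, add_zero] at h7
        exact h7.mono_left nhdsWithin_le_nhds
      filter_upwards [h6.eventually hS] with t ht
      have hx := hS.self_of_nhds
      rw [norm_smul, norm_smul, Real.norm_eq_abs (B _ - B _)]
      have := hB _ ht _ hx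
      calc _ ≤ ‖t⁻¹‖ * (K * ‖jet u (x + t • Pi.single j 1) - jet u x‖) := by gcongr
        _ = _ := by ring
  · rw [lineDeriv_zero_of_not_lineDifferentiableAt hl, abs_zero]
    positivity

lemma lip_comp {n : ℕ} {B : ((Fin n → ℝ) × ℝ × (Fin n → ℝ)) → ℝ}
    {S : Set ((Fin n → ℝ) × ℝ × (Fin n → ℝ))} {K : ℝ} (hK : 0 ≤ K)
    (hB : ∀ P ∈ S, ∀ Q ∈ S, |B P - B Q| ≤ K * ‖P - Q‖) {u : (Fin n → ℝ) → ℝ} {x₀ : Fin n → ℝ}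
    {r : ℝ} (hu : ∀ x ∈ closedBall x₀ r, ContDiffAt ℝ 2 u x)
    (hS : ∀ x ∈ closedBall x₀ r, jet u x ∈ S) :
    ∃ L, LipschitzOnWith L (fun y => B (jet u y)) (closedBall x₀ r) := by
  have h1 : ContDiffOn ℝ 1 (jet u) (closedBall x₀ r) := fun x hx =>
    (jet_contDiffAt (hu x hx)).contDiffWithinAt
  obtain ⟨L, hL⟩ := h1.exists_lipschitzOnWith (by simp) (convex_closedBall _ _)
    (isCompact_closedBall _ _)
  have h2 : LipschitzOnWith ⟨K, hK⟩ B S := by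
    refine LipschitzOnWith.of_dist_le_mul fun P hP Q hQ => ?_
    rw [Real.dist_eq, dist_eq_norm]
    exact hB P hP Q hQ
  exact ⟨_, h2.comp hL hS⟩

end Jets
/-! ### Averaging along segments -/

section Avg

lemma seg_mem {n : ℕ} {x₀ v x : Fin n → ℝ} {r r' t : ℝ} (h : r + ‖v‖ < r')
    (hx : x ∈ closedBall x₀ r) (ht : t ∈ Icc (0 : ℝ) 1) : x + t • v ∈ ball x₀ r' := by
  rw [mem_closedBall, dist_eq_norm] at hx
  rw [mem_ball, dist_eq_norm]
  have h1 : x + t • v - x₀ = (x - x₀) + t • v := by abel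
  rw [h1]
  refine (norm_add_le _ _).trans_lt ?_
  rw [norm_smul, Real.norm_eq_abs, abs_of_nonneg ht.1]
  have : t * ‖v‖ ≤ 1 * ‖v‖ := mul_le_mul_of_nonneg_right ht.2 (norm_nonneg _)
  linarith

lemma avg_integral {n : ℕ} {x₀ v : Fin n → ℝ} {r r' : ℝ} (h : r + ‖v‖ < r')
    {f : (Fin n → ℝ) → ℝ} (hf : ContinuousOn f (closedBall x₀ r'))
    (hf0 : ∀ x ∈ ball x₀ r', 0 ≤ f x) :
    IntegrableOn (fun x => ∫ t in (0 : ℝ)..1, f (x + t • v)) (ball x₀ r) ∧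
      ∫ x in ball x₀ r, (∫ t in (0 : ℝ)..1, f (x + t • v)) ≤ ∫ x in ball x₀ r', f x := by
  have hfi : IntegrableOn f (ball x₀ r') :=
    (hf.integrableOn_compact (isCompact_closedBall x₀ r')).mono_set ball_subset_closedBall
  have hc : ContinuousOn (fun p : (Fin n → ℝ) × ℝ => f (p.1 + p.2 • v))
      (closedBall x₀ r ×ˢ Icc (0 : ℝ) 1) := by
    refine hf.comp (by fun_prop) ?_
    rintro ⟨x, t⟩ ⟨hx, ht⟩
    exact ball_subset_closedBall (seg_mem h hx ht)
  have hI : Integrable (fun p : (Fin n → ℝ) × ℝ => f (p.1 + p.2 • v))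
      ((volume.restrict (ball x₀ r)).prod (volume.restrict (Ioc (0 : ℝ) 1))) := by
    rw [Measure.prod_restrict]
    exact (hc.integrableOn_compact (μ := volume.prod volume)
      ((isCompact_closedBall x₀ r).prod isCompact_Icc)).mono_set
      (prod_mono ball_subset_closedBall Ioc_subset_Icc_self)
  simp only [intervalIntegral.integral_of_le (zero_le_one (α := ℝ))]
  refine ⟨hI.integral_prod_left, ?_⟩
  rw [integral_integral_swap hI]
  have hI2 := hI.integral_prod_right
  have key : ∀ t ∈ Ioc (0 : ℝ) 1, ∫ x in ball x₀ r, f (x + t • v) ≤ ∫ x in ball x₀ r', f x := by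
    intro t ht
    have e : ∫ x in ball x₀ r, f (x + t • v) = ∫ y in ball (x₀ + t • v) r, f y := by
      have h1 := (measurePreserving_add_right (volume : Measure (Fin n → ℝ))
        (t • v)).setIntegral_preimage_emb (measurableEmbedding_addRight (t • v)) f
        (ball (x₀ + t • v) r)
      rw [← h1]
      congr 2
      ext x
      simp [dist_eq_norm]
    rw [e]
    refine setIntegral_mono_set hfi ?_ ?_
    · exact (ae_restrict_iff' measurableSet_ball).2 (Filter.Eventually.of_forall hf0)
    · refine HasSubset.Subset.eventuallyLE ?_
      intro y hy
      have : y - t • v ∈ closedBall x₀ r := by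
        rw [mem_ball, dist_eq_norm] at hy
        rw [mem_closedBall, dist_eq_norm]
        rw [show y - t • v - x₀ = y - (x₀ + t • v) by abel]
        exact hy.le
      simpa using seg_mem h this ⟨ht.1.le, ht.2⟩
  calc _ ≤ ∫ t in Ioc (0 : ℝ) 1, (∫ x in ball x₀ r', f x) :=
        setIntegral_mono_on hI2 (by simp [integrable_const_iff]) measurableSet_Ioc key
    _ = _ := by simp

lemma sq_avg_le {f : ℝ → ℝ} (hf : ContinuousOn f (Icc 0 1)) :
    (∫ t in (0 : ℝ)..1, f t) ^ 2 ≤ ∫ t in (0 : ℝ)..1, f t ^ 2 := by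
  have hu : uIcc (0 : ℝ) 1 = Icc 0 1 := uIcc_of_le zero_le_one
  have i1 : IntervalIntegrable f volume 0 1 := (hu ▸ hf).intervalIntegrable
  have i2 : IntervalIntegrable (fun t => f t ^ 2) volume 0 1 :=
    ContinuousOn.intervalIntegrable (hu ▸ hf.pow 2)
  set W := ∫ t in (0 : ℝ)..1, f t with hW
  have h0 : 0 ≤ ∫ t in (0 : ℝ)..1, (f t - W) ^ 2 :=
    intervalIntegral.integral_nonneg zero_le_one fun t _ => sq_nonneg _
  have e : ∫ t in (0 : ℝ)..1, (f t - W) ^ 2 = (∫ t in (0 : ℝ)..1, f t ^ 2) - 2 * W * W + W ^ 2 := by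
    have : ∀ t, (f t - W) ^ 2 = f t ^ 2 - 2 * W * f t + W ^ 2 := fun t => by ring
    simp only [this]
    rw [intervalIntegral.integral_add (i2.sub (i1.const_mul _)) (by simp),
      intervalIntegral.integral_sub i2 (i1.const_mul _), intervalIntegral.integral_const_mul, ← hW]
    simp
  nlinarith

lemma jet_diff {n : ℕ} {u w : (Fin n → ℝ) → ℝ} {x : Fin n → ℝ} {M s : ℝ} (hM : 0 ≤ M) (l : Fin n)
    (hu : ∀ t ∈ Icc (0 : ℝ) 1, ContDiffAt ℝ 2 u (x + t • (s • (Pi.single l 1 : Fin n → ℝ))))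
    (hu1 : ∀ t ∈ Icc (0 : ℝ) 1, |u (x + t • (s • (Pi.single l 1 : Fin n → ℝ)))|
      + vnorm (grad u (x + t • (s • (Pi.single l 1 : Fin n → ℝ)))) ≤ M)
    (hw : ∀ t ∈ Icc (0 : ℝ) 1, 1 ≤ w (x + t • (s • (Pi.single l 1 : Fin n → ℝ))) ∧
      matNorm (hess u (x + t • (s • (Pi.single l 1 : Fin n → ℝ))))
        ≤ w (x + t • (s • (Pi.single l 1 : Fin n → ℝ))))
    (hwc : ContinuousOn (fun t : ℝ => w (x + t • (s • (Pi.single l 1 : Fin n → ℝ)))) (Icc 0 1)) :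
    ‖jet u (x + s • (Pi.single l 1 : Fin n → ℝ)) - jet u x‖ ^ 2 ≤ (1 + M) ^ 2 * s ^ 2 *
      ∫ t in (0 : ℝ)..1, w (x + t • (s • (Pi.single l 1 : Fin n → ℝ))) ^ 2 := by
  set v := s • (Pi.single l 1 : Fin n → ℝ) with hv
  have hu' : uIcc (0 : ℝ) 1 = Icc 0 1 := uIcc_of_le zero_le_one
  have hd : ∀ t ∈ uIcc (0 : ℝ) 1, HasDerivAt (fun t : ℝ => jet u (x + t • v))
      (fderiv ℝ (jet u) (x + t • v) v) t := by
    intro t ht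
    have h1 := ((jet_contDiffAt (hu t (hu' ▸ ht))).differentiableAt (by simp)).hasFDerivAt
    have h2 : HasDerivAt (fun t : ℝ => x + t • v) v t := by
      simpa using ((hasDerivAt_id t).smul_const v).const_add x
    exact h1.comp_hasDerivAt t h2
  have hc : ContinuousOn (fun t : ℝ => fderiv ℝ (jet u) (x + t • v) v) (Icc 0 1) := by
    intro t ht
    have h1 := ((jet_contDiffAt (hu t ht)).fderiv_right (m := 0) (by simp)).continuousAt
    have h2 : ContinuousAt (fun t : ℝ => x + t • v) t := by fun_prop
    have h3 : ContinuousAt (fun t : ℝ => fderiv ℝ (jet u) (x + t • v)) t :=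
      ContinuousAt.comp (f := fun t : ℝ => x + t • v) h1 h2
    exact (h3.clm_apply continuousAt_const).continuousWithinAt
  have hF := intervalIntegral.integral_eq_sub_of_hasDerivAt hd
    (ContinuousOn.intervalIntegrable (hu' ▸ hc))
  simp only [one_smul, zero_smul, add_zero] at hF
  have hb : ∀ t ∈ Icc (0 : ℝ) 1, ‖fderiv ℝ (jet u) (x + t • v) v‖
      ≤ (1 + M) * |s| * w (x + t • v) := by
    intro t ht
    have h1 := jet_deriv_norm hM (hw t ht).1 (hu1 t ht) (hw t ht).2 l
    rw [← jet_fderiv (hu t ht)] at h1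
    rw [hv, map_smul, norm_smul, Real.norm_eq_abs, ← hv]
    calc _ ≤ |s| * ((1 + M) * w (x + t • v)) := mul_le_mul_of_nonneg_left h1 (abs_nonneg _)
      _ = _ := by ring
  have hn : ‖jet u (x + v) - jet u x‖ ≤ (1 + M) * |s| * ∫ t in (0 : ℝ)..1, w (x + t • v) := by
    rw [← hF, ← intervalIntegral.integral_const_mul]
    refine intervalIntegral.norm_integral_le_of_norm_le zero_le_one ?_ ?_
    · exact Filter.Eventually.of_forall fun t ht => hb t (Ioc_subset_Icc_self ht)
    · exact ContinuousOn.intervalIntegrable (hu' ▸ hwc.const_smul ((1 + M) * |s|))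
  have hs := sq_avg_le hwc
  calc _ ≤ ((1 + M) * |s| * ∫ t in (0 : ℝ)..1, w (x + t • v)) ^ 2 :=
        pow_le_pow_left₀ (norm_nonneg _) hn 2
    _ = (1 + M) ^ 2 * s ^ 2 * (∫ t in (0 : ℝ)..1, w (x + t • v)) ^ 2 := by
        rw [mul_pow, mul_pow, sq_abs]
    _ ≤ _ := mul_le_mul_of_nonneg_left hs (by positivity)

lemma ddq_comp {n : ℕ} {G : ((Fin n → ℝ) × ℝ × (Fin n → ℝ)) → ℝ}
    {S : Set ((Fin n → ℝ) × ℝ × (Fin n → ℝ))} {Λ : ℝ} (hG : GoodH G S Λ) (hS : Convex ℝ S)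
    {u : (Fin n → ℝ) → ℝ} {x : Fin n → ℝ} {h : ℝ} (hh : h ≠ 0) (l : Fin n)
    (h0 : jet u x ∈ S) (h1 : jet u (x + h • (Pi.single l 1 : Fin n → ℝ)) ∈ S)
    (h2 : jet u (x - h • (Pi.single l 1 : Fin n → ℝ)) ∈ S) {E1 E2 : ℝ}
    (e1 : ‖jet u (x + h • (Pi.single l 1 : Fin n → ℝ)) - jet u x‖ ^ 2 ≤ h ^ 2 * E1)
    (e2 : ‖jet u (x - h • (Pi.single l 1 : Fin n → ℝ)) - jet u x‖ ^ 2 ≤ h ^ 2 * E2) :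
    |ddq l h (fun y => G (jet u y)) x - (fderiv ℝ G (jet u x) (0, 1, 0) * ddq l h u x
      + ∑ m, bCoef G m (jet u x) * ddq l h (pd m u) x)| ≤ Λ * (E1 + E2) := by
  have t1 := hG.taylor hS h0 h1
  have t2 := hG.taylor hS h0 h2
  set v := h • (Pi.single l 1 : Fin n → ℝ) with hv
  set L := fderiv ℝ G (jet u x) with hL
  have hh2 : 0 < h ^ 2 := by positivity
  have e : L (0, 1, 0) * ddq l h u x + ∑ m, bCoef G m (jet u x) * ddq l h (pd m u) x
      = (L (jet u (x + v) - jet u x) + L (jet u (x - v) - jet u x)) / h ^ 2 := by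
    have d1 := vec_decomp L 0 (ddq l h u x) (fun m => ddq l h (pd m u) x)
    have d2 : L (0, ddq l h u x, 0) = L (0, 1, 0) * ddq l h u x := by
      have : ((0, ddq l h u x, 0) : (Fin n → ℝ) × ℝ × (Fin n → ℝ))
        = ddq l h u x • (0, 1, 0) := by simp
      rw [this, map_smul, smul_eq_mul, mul_comm]
    have d3 : ((0, ddq l h u x, fun m => ddq l h (pd m u) x) : (Fin n → ℝ) × ℝ × (Fin n → ℝ))
        = (h ^ 2)⁻¹ • ((jet u (x + v) - jet u x) + (jet u (x - v) - jet u x)) := by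
      refine Prod.ext ?_ (Prod.ext ?_ ?_)
      · simp [jet]
      · simp only [jet, ddq, Prod.smul_snd, Prod.smul_fst, Prod.snd_add, Prod.fst_add, Prod.snd_sub,
          Prod.fst_sub, smul_eq_mul, ← hv]
        field_simp
        ring
      · funext m
        simp only [jet, ddq, Prod.smul_snd, Prod.snd_add, Prod.snd_sub, Pi.smul_apply, Pi.add_apply,
          Pi.sub_apply, grad, smul_eq_mul, ← hv]
        field_simp
        ring
    rw [← d2]
    change _ + ∑ m, L (0, 0, Pi.single m 1) * _ = _
    rw [← d1, d3, map_smul, map_add, smul_eq_mul]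
    field_simp
  rw [e, ddq, ← hv]
  have e' : (G (jet u (x + v)) - 2 * G (jet u x) + G (jet u (x - v))) / h ^ 2
      - (L (jet u (x + v) - jet u x) + L (jet u (x - v) - jet u x)) / h ^ 2
      = ((G (jet u (x + v)) - G (jet u x) - L (jet u (x + v) - jet u x))
        + (G (jet u (x - v)) - G (jet u x) - L (jet u (x - v) - jet u x))) / h ^ 2 := by
    field_simp
    ring
  rw [e', abs_div, abs_of_pos hh2, div_le_iff₀ hh2]
  refine (abs_add_le _ _).trans ((add_le_add t1 t2).trans ?_)
  have a1 := mul_le_mul_of_nonneg_left e1 hG.1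
  have a2 := mul_le_mul_of_nonneg_left e2 hG.1
  linarith

lemma young3 {a b c α β γ : ℝ} (ha : 0 ≤ a) (hb : 0 ≤ b) (hc : 0 ≤ c) (hα : 0 ≤ α) (hβ : 0 ≤ β)
    (hγ : 0 ≤ γ) : a ^ α * b ^ β * c ^ γ ≤ a ^ (α + β + γ) + b ^ (α + β + γ) + c ^ (α + β + γ) := by
  set m := max a (max b c) with hm
  have h0 : 0 ≤ m := le_max_of_le_left ha
  have h1 : a ^ α * b ^ β * c ^ γ ≤ m ^ (α + β + γ) := by
    rw [Real.rpow_add_of_nonneg h0 (by positivity) hγ, Real.rpow_add_of_nonneg h0 hα hβ]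
    have := Real.rpow_le_rpow ha (le_max_left a (max b c)) hα
    have := Real.rpow_le_rpow hb ((le_max_left b c).trans (le_max_right a (max b c))) hβ
    have := Real.rpow_le_rpow hc ((le_max_right b c).trans (le_max_right a (max b c))) hγ
    gcongr
  refine h1.trans ?_
  have p1 : 0 ≤ a ^ (α + β + γ) := by positivity
  have p2 : 0 ≤ b ^ (α + β + γ) := by positivity
  have p3 : 0 ≤ c ^ (α + β + γ) := by positivity
  rcases max_choice a (max b c) with h | h
  · rw [hm, h]; linarith
  · rw [hm, h]
    rcases max_choice b c with h | h <;> rw [h] <;> linarith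

end Avg
/-! ### Pointwise facts -/

section Pointwise

lemma ddq_contDiffAt {n : ℕ} {N : WithTop ℕ∞} {u : (Fin n → ℝ) → ℝ} {x : Fin n → ℝ} {h : ℝ}
    (l : Fin n) (h0 : ContDiffAt ℝ N u x)
    (h1 : ContDiffAt ℝ N u (x + h • (Pi.single l 1 : Fin n → ℝ)))
    (h2 : ContDiffAt ℝ N u (x - h • (Pi.single l 1 : Fin n → ℝ))) :
    ContDiffAt ℝ N (ddq l h u) x := by
  have e1 : ContDiffAt ℝ N (fun y => u (y + h • (Pi.single l 1 : Fin n → ℝ))) x :=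
    ContDiffAt.comp (f := fun y => y + h • (Pi.single l 1 : Fin n → ℝ)) x h1
      (contDiffAt_id.add contDiffAt_const)
  have e2 : ContDiffAt ℝ N (fun y => u (y - h • (Pi.single l 1 : Fin n → ℝ))) x :=
    ContDiffAt.comp (f := fun y => y - h • (Pi.single l 1 : Fin n → ℝ)) x h2
      (contDiffAt_id.sub contDiffAt_const)
  exact ((e1.sub (contDiffAt_const.mul h0)).add e2).div_const _

lemma pd_ddq {n : ℕ} {u : (Fin n → ℝ) → ℝ} {x : Fin n → ℝ} {h : ℝ}
    (l m : Fin n) (h0 : DifferentiableAt ℝ u x)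
    (h1 : DifferentiableAt ℝ u (x + h • (Pi.single l 1 : Fin n → ℝ)))
    (h2 : DifferentiableAt ℝ u (x - h • (Pi.single l 1 : Fin n → ℝ))) :
    pd m (ddq l h u) x = ddq l h (pd m u) x := by
  have e1 : HasFDerivAt (fun y => u (y + h • (Pi.single l 1 : Fin n → ℝ)))
      (fderiv ℝ u (x + h • (Pi.single l 1 : Fin n → ℝ))) x := by
    have := h1.hasFDerivAt.comp x ((hasFDerivAt_id x).add_const (h • (Pi.single l 1 : Fin n → ℝ)))
    rw [ContinuousLinearMap.comp_id] at this
    exact this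
  have e2 : HasFDerivAt (fun y => u (y - h • (Pi.single l 1 : Fin n → ℝ)))
      (fderiv ℝ u (x - h • (Pi.single l 1 : Fin n → ℝ))) x := by
    have := h2.hasFDerivAt.comp x ((hasFDerivAt_id x).sub_const (h • (Pi.single l 1 : Fin n → ℝ)))
    rw [ContinuousLinearMap.comp_id] at this
    exact this
  have e3 := ((e1.sub (h0.hasFDerivAt.const_mul 2)).add e2).mul_const ((h ^ 2)⁻¹)
  have e4 : HasFDerivAt (ddq l h u) _ x := e3
  rw [pd, e4.fderiv]
  simp [ddq, pd]
  ring

/-- Standing assumptions on `u`. -/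
structure UCtx {n : ℕ} (G : ((Fin n → ℝ) × ℝ × (Fin n → ℝ)) → ℝ) (x₀ : Fin n → ℝ) (R M Λ : ℝ)
    (u w : (Fin n → ℝ) → ℝ) : Prop where
  hM : 0 ≤ M
  hG : GoodH G (jetSet x₀ R M) Λ
  hu : ∀ x ∈ closedBall x₀ (2 * R), ContDiffAt ℝ 3 u x
  hu1 : ∀ x ∈ ball x₀ (2 * R), |u x| + vnorm (grad u x) ≤ M
  hw : ∀ x ∈ ball x₀ (2 * R), 1 ≤ w x ∧ matNorm (hess u x) ≤ w x
  hwc : ContinuousOn w (closedBall x₀ (2 * R))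

/-- The augmented Hessian. -/
noncomputable def Amat {n : ℕ} (G : ((Fin n → ℝ) × ℝ × (Fin n → ℝ)) → ℝ) (u : (Fin n → ℝ) → ℝ)
    (x : Fin n → ℝ) : Matrix (Fin n) (Fin n) ℝ :=
  hess u x - G (jet u x) • (1 : Matrix (Fin n) (Fin n) ℝ)

variable {n : ℕ} {G : ((Fin n → ℝ) × ℝ × (Fin n → ℝ)) → ℝ} {x₀ : Fin n → ℝ} {R M Λ : ℝ}
    {u w : (Fin n → ℝ) → ℝ}

lemma UCtx.u2 (H : UCtx G x₀ R M Λ u w) {x : Fin n → ℝ} (hx : x ∈ ball x₀ (2 * R)) :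
    ContDiffAt ℝ 2 u x := (H.hu x (ball_subset_closedBall hx)).of_le (by norm_num)

lemma UCtx.mem (H : UCtx G x₀ R M Λ u w) {x : Fin n → ℝ} (hx : x ∈ ball x₀ (2 * R)) :
    jet u x ∈ jetSet x₀ R M := jet_mem H.hu1 hx

lemma UCtx.phi (H : UCtx G x₀ R M Λ u w) {x : Fin n → ℝ} (hx : x ∈ ball x₀ (2 * R)) :
    ContDiffAt ℝ 1 (fun y => G (jet u y)) x :=
  ContDiffAt.comp (f := jet u) x (H.hG.2 _ (H.mem hx)).1 (jet_contDiffAt (H.u2 hx))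

lemma UCtx.A1 (H : UCtx G x₀ R M Λ u w) {x : Fin n → ℝ} (hx : x ∈ ball x₀ (2 * R)) (i j : Fin n) :
    ContDiffAt ℝ 1 (fun y => Amat G u y i j) x := by
  have h1 : ContDiffAt ℝ 1 (pd i (pd j u)) x :=
    pd_contDiffAt (m := 1) i (pd_contDiffAt (m := 2) j (H.hu x (ball_subset_closedBall hx))
      (by norm_num)) (by norm_num)
  exact h1.sub ((H.phi hx).mul contDiffAt_const)

lemma UCtx.Asymm (H : UCtx G x₀ R M Λ u w) {x : Fin n → ℝ} (hx : x ∈ ball x₀ (2 * R)) :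
    (Amat G u x)ᵀ = Amat G u x := by
  ext i j
  simp only [Amat, hess, Matrix.transpose_apply, Matrix.sub_apply, Matrix.of_apply,
    Matrix.smul_apply, Matrix.one_apply]
  rw [pd_comm i j (H.u2 hx)]
  simp [eq_comm]

lemma UCtx.Abound (H : UCtx G x₀ R M Λ u w) {x : Fin n → ℝ} (hx : x ∈ ball x₀ (2 * R))
    (i j : Fin n) : |Amat G u x i j| ≤ (1 + Λ) * w x := by
  have h1 := (entry_le_matNorm (hess u x) i j).trans (H.hw x hx).2
  have h2 := (H.hG.2 _ (H.mem hx)).2.1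
  have h3 : |(1 : Matrix (Fin n) (Fin n) ℝ) i j| ≤ 1 := by
    rw [Matrix.one_apply]; split_ifs <;> simp
  have h4 : |G (jet u x) * (1 : Matrix (Fin n) (Fin n) ℝ) i j| ≤ Λ := by
    rw [abs_mul]
    calc _ ≤ Λ * 1 := mul_le_mul h2 h3 (abs_nonneg _) H.hG.1
      _ = Λ := mul_one _
  have h5 := (H.hw x hx).1
  simp only [Amat, Matrix.sub_apply, Matrix.smul_apply, smul_eq_mul]
  refine (abs_sub _ _).trans ?_
  have := H.hG.1
  nlinarith

lemma UCtx.phi_bound (H : UCtx G x₀ R M Λ u w) {x : Fin n → ℝ} (hx : x ∈ ball x₀ (2 * R))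
    (i : Fin n) : |pd i (fun y => G (jet u y)) x| ≤ Λ * ((1 + M) * w x) := by
  rw [pd_comp (H.u2 hx) (H.hG.2 _ (H.mem hx)).1]
  refine ((fderiv ℝ G (jet u x)).le_opNorm _).trans ?_
  exact mul_le_mul (H.hG.2 _ (H.mem hx)).2.2.1
    (jet_deriv_norm H.hM (H.hw x hx).1 (H.hu1 x hx) (H.hw x hx).2 i) (norm_nonneg _) H.hG.1

lemma UCtx.div (H : UCtx G x₀ R M Λ u w) {x : Fin n → ℝ} (hx : x ∈ ball x₀ (2 * R))
    (m : ℕ) (hm : m + 1 ≤ n) (j : Fin n) :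
    ∑ i, pd i (fun y => newtonT (m + 1) (Amat G u y) i j) x
      = -((n : ℝ) - (m + 1)) * ∑ i, newtonT m (Amat G u x) i j * pd i (fun y => G (jet u y)) x :=
  div_newtonT (H.A1 hx) (fun i => pd i (fun y => G (jet u y)) x)
    (fun i l j => hess_codazzi (H.hu x (ball_subset_closedBall hx)) (H.phi hx) i l j) m hm j

lemma T_bounds (n m : ℕ) (hm : m ≤ n) (M Λ : ℝ) (hM : 0 ≤ M) (hΛ : 0 ≤ Λ) :
    ∃ KT : ℝ, 0 ≤ KT ∧ ∀ {G : ((Fin n → ℝ) × ℝ × (Fin n → ℝ)) → ℝ} {x₀ : Fin n → ℝ} {R : ℝ}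
      {u w : (Fin n → ℝ) → ℝ}, UCtx G x₀ R M Λ u w → ∀ x ∈ ball x₀ (2 * R),
      |esymmMat m (Amat G u x)| ≤ KT * w x ^ m ∧
      (∀ i j, |newtonT m (Amat G u x) i j| ≤ KT * w x ^ m) ∧
      ∀ i, |∑ j, pd j (fun y => newtonT m (Amat G u y) i j) x| ≤ KT * w x ^ (m + 1) := by
  have basic : ∀ m, m ≤ n → ∃ K : ℝ, 0 ≤ K ∧
      ∀ {G : ((Fin n → ℝ) × ℝ × (Fin n → ℝ)) → ℝ} {x₀ : Fin n → ℝ} {R : ℝ}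
      {u w : (Fin n → ℝ) → ℝ}, UCtx G x₀ R M Λ u w → ∀ x ∈ ball x₀ (2 * R),
      |esymmMat m (Amat G u x)| ≤ K * w x ^ m ∧
      (∀ i j, |newtonT m (Amat G u x) i j| ≤ K * w x ^ m) := by
    intro m hm
    obtain ⟨C, hC, h⟩ := newton_bound n m hm
    refine ⟨C * (1 + Λ) ^ m, by positivity, fun {G x₀ R u w} H x hx => ?_⟩
    have h1 := h (Amat G u x) ((1 + Λ) * w x) (by have := (H.hw x hx).1; positivity) (H.Abound hx)
    rw [mul_pow, ← mul_assoc] at h1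
    exact h1
  obtain ⟨K, hK, h⟩ := basic m hm
  cases m with
  | zero =>
    refine ⟨K, hK, fun {G x₀ R u w} H x hx => ⟨(h H x hx).1, (h H x hx).2, fun i => ?_⟩⟩
    have : ∀ j, pd j (fun y => newtonT 0 (Amat G u y) i j) x = 0 := by
      intro j; simp [newtonT, pd]
    simp only [this]
    have := (H.hw x hx).1
    simp only [Finset.sum_const_zero, abs_zero]
    positivity
  | succ m =>
    obtain ⟨K', hK', h'⟩ := basic m (by omega)
    refine ⟨K + n * (n * (K' * (Λ * (1 + M)))), by positivity, fun {G x₀ R u w} H x hx => ?_⟩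
    have hw1 := (H.hw x hx).1
    have hw0 : 0 ≤ w x := by linarith
    have hle : K ≤ K + n * (n * (K' * (Λ * (1 + M)))) := by
      have : 0 ≤ n * (n * (K' * (Λ * (1 + M)))) := by positivity
      linarith
    refine ⟨(h H x hx).1.trans (by gcongr), fun i j => ((h H x hx).2 i j).trans (by gcongr),
      fun i => ?_⟩
    have e : ∀ j, pd j (fun y => newtonT (m + 1) (Amat G u y) i j) x
        = pd j (fun y => newtonT (m + 1) (Amat G u y) j i) x := by
      intro j
      refine pd_eq_of_eventuallyEq j ?_
      filter_upwards [isOpen_ball.mem_nhds hx] with y hy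
      have := newtonT_transpose (H.Asymm hy) (m + 1)
      exact congrFun (congrFun this j) i
    simp only [e]
    rw [H.div hx m hm i, abs_mul]
    have b1 : |-((n : ℝ) - (m + 1))| ≤ n := by
      have : ((m : ℝ) + 1) ≤ n := by exact_mod_cast hm
      rw [abs_neg, abs_of_nonneg (by linarith)]
      have : (0 : ℝ) ≤ m := Nat.cast_nonneg m
      linarith
    have b2 : |∑ i', newtonT m (Amat G u x) i' i * pd i' (fun y => G (jet u y)) x|
        ≤ n * ((K' * w x ^ m) * (Λ * ((1 + M) * w x))) := by
      refine (Finset.abs_sum_le_sum_abs _ _).trans ?_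
      calc _ ≤ ∑ i' : Fin n, ((K' * w x ^ m) * (Λ * ((1 + M) * w x))) := by
            refine Finset.sum_le_sum fun i' _ => ?_
            rw [abs_mul]
            exact mul_le_mul ((h' H x hx).2 i' i) (H.phi_bound hx i') (abs_nonneg _) (by positivity)
        _ = _ := by simp
    calc _ ≤ (n : ℝ) * (n * ((K' * w x ^ m) * (Λ * ((1 + M) * w x)))) :=
          mul_le_mul b1 b2 (abs_nonneg _) (by positivity)
      _ = (n * (n * (K' * (Λ * (1 + M))))) * w x ^ (m + 1) := by ring
      _ ≤ (n * (n * (K' * (Λ * (1 + M))))) * w x ^ (m + 1 + 1) :=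
          mul_le_mul_of_nonneg_left (pow_le_pow_right₀ hw1 (by omega)) (by positivity)
      _ ≤ _ := by
          refine mul_le_mul_of_nonneg_right ?_ (by positivity)
          linarith

/-- Bound of the good terms via integration by parts. -/
lemma UCtx.Y_bound (H : UCtx G x₀ R M Λ u w) {r q c KT K : ℝ} (hr : 0 < r) (hr2 : r < 2 * R)
    (hq : 1 < q) (hc : 0 ≤ c) (hKT : 0 ≤ KT) (hK : 0 ≤ K) {η V : (Fin n → ℝ) → ℝ} (m : ℕ)
    {Bc : Fin n → ((Fin n → ℝ) × ℝ × (Fin n → ℝ)) → ℝ}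
    (hη : ContDiff ℝ 1 η) (hη0 : ∀ x, x ∉ ball x₀ r → η x = 0)
    (hη1 : ∀ x, 0 ≤ η x ∧ η x ≤ 1) (hηg : ∀ x j, |pd j η x| ≤ c)
    (hV : ∀ x ∈ closedBall x₀ r, ContDiffAt ℝ 1 V x)
    (hT : ∀ x ∈ ball x₀ (2 * R), (∀ i j, |newtonT m (Amat G u x) i j| ≤ KT * w x ^ m) ∧
      ∀ i, |∑ j, pd j (fun y => newtonT m (Amat G u y) i j) x| ≤ KT * w x ^ (m + 1))
    (hB : ∀ i, ∀ P ∈ jetSet x₀ R M, |Bc i P| ≤ K ∧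
      ∀ Q ∈ jetSet x₀ R M, |Bc i P - Bc i Q| ≤ K * ‖P - Q‖) :
    |∫ x in ball x₀ r, η x * (max (V x) 0) ^ (q - 1) *
        ∑ i, ∑ j, newtonT m (Amat G u x) i j * Bc i (jet u x) * pd j V x|
      ≤ n ^ 2 * KT * (K * (1 + M)) * (2 + c) *
        ∫ x in ball x₀ r, (max (V x) 0) ^ q * w x ^ (m + 1) := by
  have hM := H.hM
  have hsub : closedBall x₀ r ⊆ ball x₀ (2 * R) := closedBall_subset_ball hr2
  have hsub' : ball x₀ r ⊆ ball x₀ (2 * R) := ball_subset_closedBall.trans hsub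
  have hL : ∀ i, ∃ L, LipschitzOnWith L (fun y => Bc i (jet u y)) (closedBall x₀ r) := fun i =>
    lip_comp (S := jetSet x₀ R M) hK (fun P hP Q hQ => (hB i P hP).2 Q hQ)
      (fun x hx => H.u2 (hsub hx)) (fun x hx => H.mem (hsub hx))
  choose L hL using hL
  refine ibp_vector (L := ∑ i, L i) (β := fun i y => Bc i (jet u y)) hr hq hc hKT (by positivity)
    m hη hη0 hη1 hηg hV (fun x hx i j => newtonT_contDiffAt m (H.A1 (hsub hx)) i j) ?_
    (H.hwc.mono (closedBall_subset_closedBall hr2.le)) (fun x hx => (H.hw x (hsub' hx)).1)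
    (fun x hx => (hT x (hsub' hx)).1) (fun x hx => (hT x (hsub' hx)).2) ?_ ?_
  · exact fun i => (hL i).weaken (Finset.single_le_sum (fun _ _ => zero_le) (Finset.mem_univ i))
  · intro x hx i
    refine (hB i _ (H.mem (hsub' hx))).1.trans ?_
    nlinarith
  · intro x hx i j
    have hx2 := hsub' hx
    have := lineDeriv_comp_bound (S := jetSet x₀ R M) (B := Bc i) hK
      (fun P hP Q hQ => (hB i P hP).2 Q hQ) (H.u2 hx2)
      (by filter_upwards [isOpen_ball.mem_nhds hx2] with y hy using H.mem hy) j
      (jet_deriv_norm H.hM (H.hw x hx2).1 (H.hu1 x hx2) (H.hw x hx2).2 j)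
    refine this.trans (le_of_eq (by ring))

/-- The algebraic cancellation. -/
lemma UCtx.identity (H : UCtx G x₀ R M Λ u w) {x : Fin n → ℝ} (hx : x ∈ ball x₀ (2 * R))
    (p : ℕ) (hp : p + 1 ≤ n) (ξ : Fin n → ℝ) :
    ∑ j, (∑ i, pd i (fun y => newtonT (p + 1) (Amat G u y) i j) x) * ξ j
      = ((n : ℝ) - (p + 1)) * (-(∑ i, ∑ j, newtonT p (Amat G u x) i j * betaCoef G i (jet u x) * ξ j)
        + (∑ i, ∑ j, newtonT (p + 1) (Amat G u x) i j * bCoef G i (jet u x) * ξ j)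
        - esymmMat (p + 1) (Amat G u x) * ∑ m, bCoef G m (jet u x) * ξ m) := by
  have hphi : ∀ i, pd i (fun y => G (jet u y)) x
      = betaCoef G i (jet u x) + ∑ m, bCoef G m (jet u x) * Amat G u x m i := fun i =>
    pd_comp_eq (H.u2 hx) (H.hG.2 _ (H.mem hx)).1 i
  set A := Amat G u x with hA
  have hAT : ∀ m j, ∑ i, A m i * newtonT p A i j
      = esymmMat (p + 1) A * (1 : Matrix (Fin n) (Fin n) ℝ) m j - newtonT (p + 1) A m j := by
    intro m j
    rw [← Matrix.mul_apply, ← newtonT_comm, newtonT]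
    simp
  have hd : ∀ j, ∑ i, pd i (fun y => newtonT (p + 1) (Amat G u y) i j) x
      = -((n : ℝ) - (p + 1)) * ((∑ i, newtonT p A i j * betaCoef G i (jet u x))
        + (esymmMat (p + 1) A * bCoef G j (jet u x)
          - ∑ m, newtonT (p + 1) A m j * bCoef G m (jet u x))) := by
    intro j
    rw [H.div hx p hp j]
    congr 1
    simp only [hphi, mul_add, Finset.sum_add_distrib]
    congr 1
    simp only [Finset.mul_sum]
    rw [Finset.sum_comm]
    have : ∀ m, ∑ i, newtonT p A i j * (bCoef G m (jet u x) * A m i)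
        = bCoef G m (jet u x) * (esymmMat (p + 1) A * (1 : Matrix (Fin n) (Fin n) ℝ) m j
          - newtonT (p + 1) A m j) := by
      intro m
      rw [← hAT, Finset.mul_sum]
      exact Finset.sum_congr rfl fun i _ => by ring
    simp only [← hA, this, mul_sub, Finset.sum_sub_distrib]
    congr 1
    · simp [Matrix.one_apply, mul_comm]
    · exact Finset.sum_congr rfl fun i _ => by ring
  simp only [hd]
  have e1 : ∀ (q : ℕ) (f : Fin n → ℝ), ∑ i, ∑ j, newtonT q A i j * f i * ξ j
      = ∑ j, (∑ i, newtonT q A i j * f i) * ξ j := by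
    intro q f
    rw [Finset.sum_comm]
    exact Finset.sum_congr rfl fun j _ => by rw [Finset.sum_mul]
  rw [e1, e1, Finset.mul_sum, ← Finset.sum_neg_distrib, ← Finset.sum_add_distrib,
    ← Finset.sum_sub_distrib, Finset.mul_sum]
  exact Finset.sum_congr rfl fun j _ => by ring

lemma trace_term (A : Matrix (Fin n) (Fin n) ℝ) (f : (Fin n → ℝ) → ℝ) (x : Fin n → ℝ) (l : Fin n)
    (h : ℝ) (m : ℕ) (hm : m ≤ n) :
    ∑ i, ∑ j, newtonT m A i j * ddq l h (fun y => (f y • (1 : Matrix (Fin n) (Fin n) ℝ)) i j) x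
      = ((n : ℝ) - m) * (esymmMat m A * ddq l h f x) := by
  have e : ∀ i j, ddq l h (fun y => (f y • (1 : Matrix (Fin n) (Fin n) ℝ)) i j) x
      = if i = j then ddq l h f x else 0 := by
    intro i j
    simp only [ddq, Matrix.smul_apply, Matrix.one_apply, smul_eq_mul]
    split_ifs <;> simp
  simp only [e, mul_ite, mul_zero, Finset.sum_ite_eq, Finset.mem_univ, if_true]
  rw [← Finset.sum_mul, ← mul_assoc, ← newtonT_trace A m hm]
  rfl

end Pointwise
/-! ### The remainder term -/

section Remainder

variable {n : ℕ} {G : ((Fin n → ℝ) × ℝ × (Fin n → ℝ)) → ℝ} {x₀ : Fin n → ℝ} {R M Λ : ℝ}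
    {u w : (Fin n → ℝ) → ℝ}

lemma shift_mem {x : Fin n → ℝ} {r r' s : ℝ} (l : Fin n) (h : r + |s| < r')
    (hx : x ∈ closedBall x₀ r) {t : ℝ} (ht : t ∈ Icc (0 : ℝ) 1) :
    x + t • (s • (Pi.single l 1 : Fin n → ℝ)) ∈ ball x₀ r' := by
  refine seg_mem ?_ hx ht
  rw [norm_smul, norm_ei, mul_one, Real.norm_eq_abs]
  exact h

lemma shift_mem' {x : Fin n → ℝ} {r r' s : ℝ} (l : Fin n) (h : r + |s| < r')
    (hx : x ∈ closedBall x₀ r) : x + s • (Pi.single l 1 : Fin n → ℝ) ∈ ball x₀ r' := by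
  simpa using shift_mem l h hx (t := 1) (by simp)

lemma shift_mem'' {x : Fin n → ℝ} {r r' s : ℝ} (l : Fin n) (h : r + |s| < r')
    (hx : x ∈ closedBall x₀ r) : x - s • (Pi.single l 1 : Fin n → ℝ) ∈ ball x₀ r' := by
  have := shift_mem' (s := -s) l (by rwa [abs_neg]) hx
  rwa [neg_smul, ← sub_eq_add_neg] at this

lemma UCtx.wseg (H : UCtx G x₀ R M Λ u w) {x : Fin n → ℝ} {r s : ℝ} (l : Fin n)
    (h : r + |s| < 2 * R) (hx : x ∈ closedBall x₀ r) :
    ContinuousOn (fun t : ℝ => w (x + t • (s • (Pi.single l 1 : Fin n → ℝ)))) (Icc 0 1) :=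
  H.hwc.comp (by fun_prop) fun _ ht => ball_subset_closedBall (shift_mem l h hx ht)

lemma UCtx.Zpt (H : UCtx G x₀ R M Λ u w) {x : Fin n → ℝ} {r h C₁ : ℝ} (hr : r + |h| < 2 * R)
    (hh : h ≠ 0) (hx : x ∈ closedBall x₀ r) :
    |(∑ l, ddq l h (fun y => G (jet u y)) x)
        - ∑ m, bCoef G m (jet u x) * pd m (fun y => (∑ l : Fin n, ddq l h u y) + C₁) x|
      ≤ Λ * |∑ l, ddq l h u x| + Λ * (1 + M) ^ 2 * ∑ l : Fin n,
        ((∫ t in (0 : ℝ)..1, w (x + t • (h • (Pi.single l 1 : Fin n → ℝ))) ^ 2)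
          + ∫ t in (0 : ℝ)..1, w (x + t • ((-h) • (Pi.single l 1 : Fin n → ℝ))) ^ 2) := by
  have hrn : r + |(-h)| < 2 * R := by rwa [abs_neg]
  have hx2 : x ∈ ball x₀ (2 * R) := closedBall_subset_ball (by linarith [abs_nonneg h]) hx
  have d : ∀ y ∈ ball x₀ (2 * R), DifferentiableAt ℝ u y := fun y hy =>
    (H.u2 hy).differentiableAt (by simp)
  have hp : ∀ m, pd m (fun y => (∑ l : Fin n, ddq l h u y) + C₁) x
      = ∑ l, ddq l h (pd m u) x := by
    intro m
    have e1 : pd m (fun y => (∑ l : Fin n, ddq l h u y) + C₁) x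
        = pd m (fun y => ∑ l : Fin n, ddq l h u y) x := by
      simp only [pd]; rw [fderiv_add_const]
    rw [e1, pd_sum]
    · refine Finset.sum_congr rfl fun l _ => ?_
      exact pd_ddq l m (d _ hx2) (d _ (shift_mem' l hr hx)) (d _ (shift_mem'' l hr hx))
    · intro l _
      exact (ddq_contDiffAt l (H.u2 hx2) (H.u2 (shift_mem' l hr hx))
        (H.u2 (shift_mem'' l hr hx))).differentiableAt (by simp)
  have J : ∀ s : ℝ, r + |s| < 2 * R → ∀ l : Fin n,
      ‖jet u (x + s • (Pi.single l 1 : Fin n → ℝ)) - jet u x‖ ^ 2 ≤ (1 + M) ^ 2 * s ^ 2 *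
        ∫ t in (0 : ℝ)..1, w (x + t • (s • (Pi.single l 1 : Fin n → ℝ))) ^ 2 := fun s hs l =>
    jet_diff H.hM l (fun t ht => H.u2 (shift_mem l hs hx ht))
      (fun t ht => H.hu1 _ (shift_mem l hs hx ht)) (fun t ht => H.hw _ (shift_mem l hs hx ht))
      (H.wseg l hs hx)
  have key : ∀ l : Fin n, |ddq l h (fun y => G (jet u y)) x
      - (fderiv ℝ G (jet u x) (0, 1, 0) * ddq l h u x
      + ∑ m, bCoef G m (jet u x) * ddq l h (pd m u) x)| ≤
      Λ * ((1 + M) ^ 2 * (∫ t in (0 : ℝ)..1, w (x + t • (h • (Pi.single l 1 : Fin n → ℝ))) ^ 2)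
       + (1 + M) ^ 2 * (∫ t in (0 : ℝ)..1, w (x + t • ((-h) • (Pi.single l 1 : Fin n → ℝ))) ^ 2)) := by
    intro l
    refine ddq_comp H.hG (jetSet_convex _ _ _) hh l (H.mem hx2) (H.mem (shift_mem' l hr hx))
      (H.mem (shift_mem'' l hr hx)) ?_ ?_
    · refine (J h hr l).trans (le_of_eq (by ring))
    · have := J (-h) hrn l
      rw [neg_smul, ← sub_eq_add_neg, ← neg_smul] at this
      refine this.trans (le_of_eq (by ring))
  have e : (∑ l, ddq l h (fun y => G (jet u y)) x)
        - ∑ m, bCoef G m (jet u x) * pd m (fun y => (∑ l : Fin n, ddq l h u y) + C₁) x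
      = fderiv ℝ G (jet u x) (0, 1, 0) * (∑ l, ddq l h u x) + ∑ l : Fin n,
        (ddq l h (fun y => G (jet u y)) x - (fderiv ℝ G (jet u x) (0, 1, 0) * ddq l h u x
      + ∑ m, bCoef G m (jet u x) * ddq l h (pd m u) x)) := by
    simp only [hp, Finset.sum_sub_distrib, Finset.sum_add_distrib, Finset.mul_sum]
    rw [Finset.sum_comm]
    ring
  rw [e]
  refine (abs_add_le _ _).trans (add_le_add ?_ ?_)
  · rw [abs_mul]
    refine mul_le_mul_of_nonneg_right ?_ (abs_nonneg _)
    have h1 := (fderiv ℝ G (jet u x)).le_opNorm (0, 1, 0)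
    have h2 : ‖((0, 1, 0) : (Fin n → ℝ) × ℝ × (Fin n → ℝ))‖ = 1 := by simp [Prod.norm_def]
    rw [h2, mul_one] at h1
    exact h1.trans (H.hG.2 _ (H.mem hx2)).2.2.1
  · refine (Finset.abs_sum_le_sum_abs _ _).trans ?_
    rw [Finset.mul_sum]
    refine Finset.sum_le_sum fun l _ => (key l).trans (le_of_eq (by ring))

lemma young_nat {a b c q : ℝ} (p : ℕ) (ha : 0 ≤ a) (hb : 0 ≤ b) (hc : 0 ≤ c) (hq : 1 ≤ q) :
    a ^ (q - 1) * b ^ (p + 1) * c ^ 2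
      ≤ a ^ (q + ((p + 2 : ℕ) : ℝ)) + b ^ (q + ((p + 2 : ℕ) : ℝ)) + c ^ (q + ((p + 2 : ℕ) : ℝ)) := by
  have := young3 (α := q - 1) (β := ((p + 1 : ℕ) : ℝ)) (γ := ((2 : ℕ) : ℝ)) ha hb hc
    (by linarith) (by positivity) (by positivity)
  rw [Real.rpow_natCast, Real.rpow_natCast] at this
  have e : q - 1 + ((p + 1 : ℕ) : ℝ) + ((2 : ℕ) : ℝ) = q + ((p + 2 : ℕ) : ℝ) := by
    push_cast; ring
  rwa [e] at this

lemma young_q {a b q : ℝ} (p : ℕ) (ha : 0 ≤ a) (hb : 1 ≤ b) (hq : 1 ≤ q) (m : ℕ)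
    (hm : m ≤ p + 2) :
    a ^ q * b ^ m ≤ a ^ (q + ((p + 2 : ℕ) : ℝ)) + b ^ (q + ((p + 2 : ℕ) : ℝ)) := by
  have h1 : b ^ m ≤ b ^ (p + 2) := pow_le_pow_right₀ hb hm
  have h0 : (0 : ℝ) ≤ b := by linarith
  have := young3 (α := q) (β := ((p + 2 : ℕ) : ℝ)) (γ := 0) (c := 0) ha h0 le_rfl
    (by linarith) (by positivity) le_rfl
  rw [Real.rpow_natCast, Real.rpow_zero, add_zero, mul_one,
    Real.zero_rpow (by positivity), add_zero] at this
  exact (mul_le_mul_of_nonneg_left h1 (by positivity)).trans this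

lemma young_q1 {a b q : ℝ} (p : ℕ) (ha : 0 ≤ a) (hb : 1 ≤ b) (hq : 1 ≤ q) :
    a ^ (q - 1) * b ^ (p + 1) ≤ a ^ (q + ((p + 2 : ℕ) : ℝ)) + b ^ (q + ((p + 2 : ℕ) : ℝ)) := by
  have h1 : b ^ (p + 1) ≤ b ^ (p + 3) := pow_le_pow_right₀ hb (by omega)
  have h0 : (0 : ℝ) ≤ b := by linarith
  have := young3 (α := q - 1) (β := ((p + 3 : ℕ) : ℝ)) (γ := 0) (c := 0) ha h0 le_rfl
    (by linarith) (by positivity) le_rfl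
  have e : q - 1 + ((p + 3 : ℕ) : ℝ) = q + ((p + 2 : ℕ) : ℝ) := by push_cast; ring
  rw [Real.rpow_natCast, Real.rpow_zero, add_zero, mul_one, e,
    Real.zero_rpow (by positivity), add_zero] at this
  exact (mul_le_mul_of_nonneg_left h1 (by positivity)).trans this

lemma young_int {a b q : ℝ} (p : ℕ) (ha : 0 ≤ a) (hb : 0 ≤ b) (hq : 1 ≤ q) {f : ℝ → ℝ}
    (hf : ContinuousOn f (Icc 0 1)) (hf0 : ∀ t ∈ Icc (0 : ℝ) 1, 0 ≤ f t) :
    a ^ (q - 1) * b ^ (p + 1) * (∫ t in (0 : ℝ)..1, f t ^ 2)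
      ≤ a ^ (q + ((p + 2 : ℕ) : ℝ)) + b ^ (q + ((p + 2 : ℕ) : ℝ))
        + ∫ t in (0 : ℝ)..1, f t ^ (q + ((p + 2 : ℕ) : ℝ)) := by
  have hu : uIcc (0 : ℝ) 1 = Icc 0 1 := uIcc_of_le zero_le_one
  have i2 : IntervalIntegrable (fun t => f t ^ (q + ((p + 2 : ℕ) : ℝ))) volume 0 1 := by
    refine ContinuousOn.intervalIntegrable (hu ▸ hf.rpow_const fun t _ => Or.inr (by positivity))
  rw [← intervalIntegral.integral_const_mul]
  have e : a ^ (q + ((p + 2 : ℕ) : ℝ)) + b ^ (q + ((p + 2 : ℕ) : ℝ))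
        + ∫ t in (0 : ℝ)..1, f t ^ (q + ((p + 2 : ℕ) : ℝ))
      = ∫ t in (0 : ℝ)..1, (a ^ (q + ((p + 2 : ℕ) : ℝ)) + b ^ (q + ((p + 2 : ℕ) : ℝ))
        + f t ^ (q + ((p + 2 : ℕ) : ℝ))) := by
    rw [intervalIntegral.integral_add (by simp) i2]
    simp
  rw [e]
  refine intervalIntegral.integral_mono_on zero_le_one
    (ContinuousOn.intervalIntegrable (hu ▸ (continuousOn_const.mul (hf.pow 2)))) ((by simp : IntervalIntegrable
      (fun _ : ℝ => a ^ (q + ((p + 2 : ℕ) : ℝ)) + b ^ (q + ((p + 2 : ℕ) : ℝ))) volume 0 1).add i2) ?_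
  intro t ht
  exact young_nat p ha hb (hf0 t ht) hq

lemma UCtx.Zpt2 (H : UCtx G x₀ R M Λ u w) {x : Fin n → ℝ} {r h C₁ q e K : ℝ} (p : ℕ)
    (hr : r + |h| < 2 * R) (hh : h ≠ 0) (hx : x ∈ closedBall x₀ r) (hC0 : 0 ≤ C₁) (hC1 : C₁ ≤ M)
    (hq : 1 < q) (he : 0 ≤ e ∧ e ≤ 1) (hK : 0 ≤ K)
    (hσ : |esymmMat (p + 1) (Amat G u x)| ≤ K * w x ^ (p + 1)) :
    |e * (max ((∑ l : Fin n, ddq l h u x) + C₁) 0) ^ (q - 1) * (esymmMat (p + 1) (Amat G u x) *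
      ((∑ l, ddq l h (fun y => G (jet u y)) x)
        - ∑ m, bCoef G m (jet u x) * pd m (fun y => (∑ l : Fin n, ddq l h u y) + C₁) x))|
      ≤ K * Λ * (1 + M) ^ 2 * ((max ((∑ l : Fin n, ddq l h u x) + C₁) 0) ^ (q + ((p + 2 : ℕ) : ℝ))
          + w x ^ (q + ((p + 2 : ℕ) : ℝ)) + ∑ l : Fin n,
        (2 * ((max ((∑ l : Fin n, ddq l h u x) + C₁) 0) ^ (q + ((p + 2 : ℕ) : ℝ))
          + w x ^ (q + ((p + 2 : ℕ) : ℝ)))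
        + (∫ t in (0 : ℝ)..1, w (x + t • (h • (Pi.single l 1 : Fin n → ℝ))) ^ (q + ((p + 2 : ℕ) : ℝ)))
        + ∫ t in (0 : ℝ)..1,
            w (x + t • ((-h) • (Pi.single l 1 : Fin n → ℝ))) ^ (q + ((p + 2 : ℕ) : ℝ)))) := by
  have hrn : r + |(-h)| < 2 * R := by rwa [abs_neg]
  have hx2 : x ∈ ball x₀ (2 * R) := closedBall_subset_ball (by linarith [abs_nonneg h]) hx
  have hZ := H.Zpt (C₁ := C₁) hr hh hx
  set Z := (∑ l, ddq l h (fun y => G (jet u y)) x)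
        - ∑ m, bCoef G m (jet u x) * pd m (fun y => (∑ l : Fin n, ddq l h u y) + C₁) x with hZdef
  set v := ∑ l : Fin n, ddq l h u x with hv
  set a := max (v + C₁) 0 with ha
  have ha0 : 0 ≤ a := le_max_right _ _
  have hw1 := (H.hw x hx2).1
  have hw0 : 0 ≤ w x := by linarith
  have hM := H.hM
  have hΛ := H.hG.1
  set s := q + ((p + 2 : ℕ) : ℝ) with hs
  have hD0 : 0 ≤ a ^ s + w x ^ s := by positivity
  -- zeroth order
  have z1 : a ^ (q - 1) * w x ^ (p + 1) * |v| ≤ (1 + M) ^ 2 * (a ^ s + w x ^ s) := by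
    by_cases hpos : 0 < v + C₁
    · have hav : a = v + C₁ := max_eq_left hpos.le
      have : |v| ≤ a + M := by
        rw [abs_le]; constructor <;> linarith
      have y1 := young_q p ha0 hw1 hq.le (p + 1) (by omega)
      have y2 := young_q1 p ha0 hw1 hq.le
      have ea : a ^ q = a ^ (q - 1) * a := by
        have hapos : 0 < a := by rw [hav]; exact hpos
        rw [Real.rpow_sub_one hapos.ne']; field_simp
      calc a ^ (q - 1) * w x ^ (p + 1) * |v| ≤ a ^ (q - 1) * w x ^ (p + 1) * (a + M) := by gcongr
        _ = a ^ q * w x ^ (p + 1) + M * (a ^ (q - 1) * w x ^ (p + 1)) := by rw [ea]; ring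
        _ ≤ (a ^ s + w x ^ s) + M * (a ^ s + w x ^ s) :=
            add_le_add y1 (mul_le_mul_of_nonneg_left y2 hM)
        _ ≤ _ := by nlinarith [mul_nonneg hM hD0, mul_nonneg (mul_nonneg hM hM) hD0]
    · have haz : a = 0 := max_eq_right (not_lt.1 hpos)
      have hz : a ^ (q - 1) = 0 := by rw [haz, Real.zero_rpow (by linarith)]
      rw [hz, zero_mul, zero_mul]
      positivity
  have z2 : ∀ s' : ℝ, r + |s'| < 2 * R → ∀ l : Fin n, a ^ (q - 1) * w x ^ (p + 1) *
      (∫ t in (0 : ℝ)..1, w (x + t • (s' • (Pi.single l 1 : Fin n → ℝ))) ^ 2) ≤ a ^ s + w x ^ s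
        + ∫ t in (0 : ℝ)..1, w (x + t • (s' • (Pi.single l 1 : Fin n → ℝ))) ^ s := by
    intro s' hs' l
    refine young_int p ha0 hw0 hq.le (H.wseg l hs' hx) ?_
    intro t ht
    linarith [(H.hw _ (shift_mem l hs' hx ht)).1]
  have hae : 0 ≤ a ^ (q - 1) := by positivity
  calc |e * a ^ (q - 1) * (esymmMat (p + 1) (Amat G u x) * Z)|
      = e * a ^ (q - 1) * (|esymmMat (p + 1) (Amat G u x)| * |Z|) := by
        rw [abs_mul, abs_mul, abs_mul, abs_of_nonneg he.1, abs_of_nonneg hae]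
    _ ≤ 1 * a ^ (q - 1) * ((K * w x ^ (p + 1)) * (Λ * |v| + Λ * (1 + M) ^ 2 * ∑ l : Fin n,
        ((∫ t in (0 : ℝ)..1, w (x + t • (h • (Pi.single l 1 : Fin n → ℝ))) ^ 2)
          + ∫ t in (0 : ℝ)..1, w (x + t • ((-h) • (Pi.single l 1 : Fin n → ℝ))) ^ 2))) := by
        have he1 := he.2
        gcongr
    _ = K * Λ * (a ^ (q - 1) * w x ^ (p + 1) * |v|) + K * Λ * (1 + M) ^ 2 * ∑ l : Fin n,
        (a ^ (q - 1) * w x ^ (p + 1) *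
            (∫ t in (0 : ℝ)..1, w (x + t • (h • (Pi.single l 1 : Fin n → ℝ))) ^ 2)
          + a ^ (q - 1) * w x ^ (p + 1) *
            ∫ t in (0 : ℝ)..1, w (x + t • ((-h) • (Pi.single l 1 : Fin n → ℝ))) ^ 2) := by
        simp only [← mul_add, ← Finset.mul_sum]
        ring
    _ ≤ K * Λ * ((1 + M) ^ 2 * (a ^ s + w x ^ s)) + K * Λ * (1 + M) ^ 2 * ∑ l : Fin n,
        ((a ^ s + w x ^ s
        + ∫ t in (0 : ℝ)..1, w (x + t • (h • (Pi.single l 1 : Fin n → ℝ))) ^ s) + (a ^ s + w x ^ s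
        + ∫ t in (0 : ℝ)..1, w (x + t • ((-h) • (Pi.single l 1 : Fin n → ℝ))) ^ s)) := by
        refine add_le_add (mul_le_mul_of_nonneg_left z1 (by positivity))
          (mul_le_mul_of_nonneg_left ?_ (by positivity))
        exact Finset.sum_le_sum fun l _ => add_le_add (z2 h hr l) (z2 (-h) hrn l)
    _ = _ := by
        rw [← mul_assoc, ← mul_add]
        congr 2
        exact Finset.sum_congr rfl fun l _ => by ring

end Remainder
/-! ### Assembly -/

section Assembly

variable {n : ℕ} {G : ((Fin n → ℝ) × ℝ × (Fin n → ℝ)) → ℝ} {x₀ : Fin n → ℝ} {R M Λ : ℝ}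
    {u w : (Fin n → ℝ) → ℝ}

lemma UCtx.main (H : UCtx G x₀ R M Λ u w) {r r' h C₁ q c KP KT Kb Kβ : ℝ} (p : ℕ)
    (hp : p + 2 ≤ n) (hr0 : 0 < r) (hr : r + |h| < r') (hr' : r' ≤ 2 * R) (hh : h ≠ 0)
    (hC0 : 0 ≤ C₁) (hC1 : C₁ ≤ M) (hq : 1 < q) (hc : 0 ≤ c) (hKP : 0 ≤ KP) (hKT : 0 ≤ KT)
    (hKb : 0 ≤ Kb) (hKβ : 0 ≤ Kβ) {η : (Fin n → ℝ) → ℝ}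
    (hη : ContDiff ℝ 1 η) (hη0 : ∀ x, x ∉ ball x₀ r → η x = 0)
    (hη1 : ∀ x, 0 ≤ η x ∧ η x ≤ 1) (hηg : ∀ x j, |pd j η x| ≤ c)
    (hTP : ∀ x ∈ ball x₀ (2 * R), (∀ i j, |newtonT p (Amat G u x) i j| ≤ KP * w x ^ p) ∧
      ∀ i, |∑ j, pd j (fun y => newtonT p (Amat G u y) i j) x| ≤ KP * w x ^ (p + 1))
    (hT : ∀ x ∈ ball x₀ (2 * R), |esymmMat (p + 1) (Amat G u x)| ≤ KT * w x ^ (p + 1) ∧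
      (∀ i j, |newtonT (p + 1) (Amat G u x) i j| ≤ KT * w x ^ (p + 1)) ∧
      ∀ i, |∑ j, pd j (fun y => newtonT (p + 1) (Amat G u y) i j) x| ≤ KT * w x ^ (p + 1 + 1))
    (hb : ∀ i, ∀ P ∈ jetSet x₀ R M, |bCoef G i P| ≤ Kb ∧
      ∀ Q ∈ jetSet x₀ R M, |bCoef G i P - bCoef G i Q| ≤ Kb * ‖P - Q‖)
    (hβ : ∀ i, ∀ P ∈ jetSet x₀ R M, |betaCoef G i P| ≤ Kβ ∧
      ∀ Q ∈ jetSet x₀ R M, |betaCoef G i P - betaCoef G i Q| ≤ Kβ * ‖P - Q‖) :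
    |(∫ x in ball x₀ r,
          η x * (max ((∑ l : Fin n, ddq l h u x) + C₁) 0) ^ (q - 1) *
            ∑ j, (∑ i, pd i (fun y => newtonT (p + 1) (Amat G u y) i j) x) *
              pd j (fun y => (∑ l : Fin n, ddq l h u y) + C₁) x)
        + ∑ l : Fin n, ∫ x in ball x₀ r,
            η x * (max ((∑ l' : Fin n, ddq l' h u x) + C₁) 0) ^ (q - 1) *
              ∑ i, ∑ j, newtonT (p + 1) (Amat G u x) i j *
                ddq l h (fun y => (G (jet u y) • (1 : Matrix (Fin n) (Fin n) ℝ)) i j) x|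
      ≤ n * ((n ^ 2 * KP * (Kβ * (1 + M)) + n ^ 2 * KT * (Kb * (1 + M))) * (2 + c)
          + KT * Λ * (1 + M) ^ 2 * (1 + 4 * n)) *
        ((∫ x in ball x₀ r,
            (max ((∑ l : Fin n, ddq l h u x) + C₁) 0) ^ (q + ((p + 2 : ℕ) : ℝ)))
          + ∫ x in ball x₀ r', w x ^ (q + ((p + 2 : ℕ) : ℝ))) := by
  have hrR : r + |h| < 2 * R := by linarith
  have hr2 : r < 2 * R := by linarith [abs_nonneg h]
  have hM := H.hM
  have hΛ := H.hG.1
  have hsubK : closedBall x₀ r ⊆ ball x₀ (2 * R) := closedBall_subset_ball hr2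
  have hBK : ball x₀ r ⊆ closedBall x₀ r := ball_subset_closedBall
  have hsub : ball x₀ r ⊆ ball x₀ (2 * R) := hBK.trans hsubK
  have hs0 : (0 : ℝ) < q + ((p + 2 : ℕ) : ℝ) := by positivity
  set s := q + ((p + 2 : ℕ) : ℝ) with hs
  set V : (Fin n → ℝ) → ℝ := fun y => (∑ l : Fin n, ddq l h u y) + C₁ with hVdef
  have hV : ∀ x ∈ closedBall x₀ r, ContDiffAt ℝ 1 V x := by
    intro x hx
    refine ContDiffAt.add (ContDiffAt.sum fun l _ => ?_) contDiffAt_const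
    exact (ddq_contDiffAt l (H.u2 (hsubK hx)) (H.u2 (shift_mem' l hrR hx))
      (H.u2 (shift_mem'' l hrR hx))).of_le (by norm_num)
  have int : ∀ f : (Fin n → ℝ) → ℝ, ContinuousOn f (closedBall x₀ r) → IntegrableOn f (ball x₀ r) :=
    fun f hf => (hf.integrableOn_compact (isCompact_closedBall x₀ r)).mono_set hBK
  -- continuity
  have cη : ContinuousOn η (closedBall x₀ r) := hη.continuous.continuousOn
  have cV : ContinuousOn V (closedBall x₀ r) := fun x hx =>
    (hV x hx).continuousAt.continuousWithinAt
  have cVd : ∀ j, ContinuousOn (pd j V) (closedBall x₀ r) := fun j x hx =>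
    (pd_contDiffAt (m := 0) j (hV x hx) (by simp)).continuousAt.continuousWithinAt
  have ca : ∀ e : ℝ, 0 ≤ e → ContinuousOn (fun x => (max (V x) 0) ^ e) (closedBall x₀ r) :=
    fun e he => (posPart_continuous he).comp_continuousOn cV
  have cw : ContinuousOn w (closedBall x₀ r) := H.hwc.mono (closedBall_subset_closedBall hr2.le)
  have cT : ∀ m i j, ContinuousOn (fun x => newtonT m (Amat G u x) i j) (closedBall x₀ r) :=
    fun m i j x hx => (newtonT_contDiffAt m (H.A1 (hsubK hx)) i j).continuousAt.continuousWithinAt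
  have cσ : ContinuousOn (fun x => esymmMat (p + 1) (Amat G u x)) (closedBall x₀ r) :=
    fun x hx => (esymm_contDiffAt (p + 1) (H.A1 (hsubK hx))).continuousAt.continuousWithinAt
  have cb : ∀ i, ContinuousOn (fun x => bCoef G i (jet u x)) (closedBall x₀ r) := by
    intro i
    obtain ⟨L, hL⟩ := lip_comp (S := jetSet x₀ R M) hKb (fun P hP Q hQ => (hb i P hP).2 Q hQ)
      (fun x hx => H.u2 (hsubK hx)) (fun x hx => H.mem (hsubK hx))
    exact hL.continuousOn
  have cβ : ∀ i, ContinuousOn (fun x => betaCoef G i (jet u x)) (closedBall x₀ r) := by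
    intro i
    obtain ⟨L, hL⟩ := lip_comp (S := jetSet x₀ R M) hKβ (fun P hP Q hQ => (hβ i P hP).2 Q hQ)
      (fun x hx => H.u2 (hsubK hx)) (fun x hx => H.mem (hsubK hx))
    exact hL.continuousOn
  have cφ : ∀ l, ContinuousOn (ddq l h (fun y => G (jet u y))) (closedBall x₀ r) := fun l x hx =>
    (ddq_contDiffAt l (H.phi (hsubK hx)) (H.phi (shift_mem' l hrR hx))
      (H.phi (shift_mem'' l hrR hx))).continuousAt.continuousWithinAt
  have ca1 := ca (q - 1) (by linarith)
  -- the pieces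
  set Y0 : (Fin n → ℝ) → ℝ := fun x => η x * (max (V x) 0) ^ (q - 1) *
    ∑ i, ∑ j, newtonT p (Amat G u x) i j * betaCoef G i (jet u x) * pd j V x with hY0
  set Y1 : (Fin n → ℝ) → ℝ := fun x => η x * (max (V x) 0) ^ (q - 1) *
    ∑ i, ∑ j, newtonT (p + 1) (Amat G u x) i j * bCoef G i (jet u x) * pd j V x with hY1
  set Zb : (Fin n → ℝ) → ℝ := fun x => η x * (max (V x) 0) ^ (q - 1) *
    (esymmMat (p + 1) (Amat G u x) * ∑ m, bCoef G m (jet u x) * pd m V x) with hZb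
  set Zl : Fin n → (Fin n → ℝ) → ℝ := fun l x => η x * (max (V x) 0) ^ (q - 1) *
    (esymmMat (p + 1) (Amat G u x) * ddq l h (fun y => G (jet u y)) x) with hZl
  set Z : (Fin n → ℝ) → ℝ := fun x => η x * (max (V x) 0) ^ (q - 1) *
    (esymmMat (p + 1) (Amat G u x) * ((∑ l, ddq l h (fun y => G (jet u y)) x)
      - ∑ m, bCoef G m (jet u x) * pd m V x)) with hZ
  have iY0 : IntegrableOn Y0 (ball x₀ r) := int _ ((cη.mul ca1).mul (continuousOn_finsetSum _
    fun i _ => continuousOn_finsetSum _ fun j _ => ((cT p i j).mul (cβ i)).mul (cVd j)))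
  have iY1 : IntegrableOn Y1 (ball x₀ r) := int _ ((cη.mul ca1).mul (continuousOn_finsetSum _
    fun i _ => continuousOn_finsetSum _ fun j _ => ((cT (p + 1) i j).mul (cb i)).mul (cVd j)))
  have iZb : IntegrableOn Zb (ball x₀ r) := int _ ((cη.mul ca1).mul (cσ.mul
    (continuousOn_finsetSum _ fun i _ => (cb i).mul (cVd i))))
  have iZl : ∀ l, IntegrableOn (Zl l) (ball x₀ r) := fun l =>
    int _ ((cη.mul ca1).mul (cσ.mul (cφ l)))
  set N : ℝ := (n : ℝ) - ((p : ℝ) + 1) with hN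
  have hN0 : 0 ≤ N := by
    have : ((p + 2 : ℕ) : ℝ) ≤ n := by exact_mod_cast hp
    push_cast at this; rw [hN]; linarith
  have hNn : N ≤ n := by
    have : (0 : ℝ) ≤ p := Nat.cast_nonneg p
    rw [hN]; linarith
  have E1 : (∫ x in ball x₀ r, η x * (max (V x) 0) ^ (q - 1) *
            ∑ j, (∑ i, pd i (fun y => newtonT (p + 1) (Amat G u y) i j) x) * pd j V x)
      = N * (-(∫ x in ball x₀ r, Y0 x) + (∫ x in ball x₀ r, Y1 x) - ∫ x in ball x₀ r, Zb x) := by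
    have e0 : -(∫ x in ball x₀ r, Y0 x) + (∫ x in ball x₀ r, Y1 x) - (∫ x in ball x₀ r, Zb x)
        = ∫ x in ball x₀ r, (Y1 x - Y0 x - Zb x) := by
      have e1 := integral_sub (iY1.sub iY0) iZb
      have e2 := integral_sub iY1 iY0
      simp only [Pi.sub_apply] at e1
      rw [e1, e2]; ring
    rw [e0, ← integral_const_mul]
    refine setIntegral_congr_fun measurableSet_ball fun x hx => ?_
    rw [H.identity (hsub hx) p (by omega) (fun j => pd j V x)]
    simp only [hY0, hY1, hZb, hN]
    ring
  have E2 : ∀ l : Fin n, (∫ x in ball x₀ r, η x * (max (V x) 0) ^ (q - 1) *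
              ∑ i, ∑ j, newtonT (p + 1) (Amat G u x) i j *
                ddq l h (fun y => (G (jet u y) • (1 : Matrix (Fin n) (Fin n) ℝ)) i j) x)
      = N * ∫ x in ball x₀ r, Zl l x := by
    intro l
    rw [← integral_const_mul]
    refine setIntegral_congr_fun measurableSet_ball fun x hx => ?_
    rw [trace_term (Amat G u x) (fun y => G (jet u y)) x l h (p + 1) (by omega)]
    simp only [hZl, hN]
    push_cast
    ring
  have E3 : (∑ l, ∫ x in ball x₀ r, Zl l x) - (∫ x in ball x₀ r, Zb x) = ∫ x in ball x₀ r, Z x := by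
    rw [← integral_finsetSum _ fun l _ => iZl l, ← integral_sub
      (integrable_finsetSum _ fun l _ => iZl l) iZb]
    refine setIntegral_congr_fun measurableSet_ball fun x hx => ?_
    simp only [hZl, hZb, hZ, ← Finset.mul_sum]
    ring
  -- the right-hand side
  have ias : IntegrableOn (fun x => (max (V x) 0) ^ s) (ball x₀ r) := int _ (ca s hs0.le)
  have cws : ContinuousOn (fun x => w x ^ s) (closedBall x₀ (2 * R)) :=
    H.hwc.rpow_const fun _ _ => Or.inr hs0.le
  have iws : IntegrableOn (fun x => w x ^ s) (ball x₀ r) :=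
    int _ (cws.mono (closedBall_subset_closedBall hr2.le))
  have iws' : IntegrableOn (fun x => w x ^ s) (ball x₀ r') :=
    ((cws.mono (closedBall_subset_closedBall hr')).integrableOn_compact
      (isCompact_closedBall x₀ r')).mono_set ball_subset_closedBall
  have hw0 : ∀ x ∈ ball x₀ r', 0 ≤ w x ^ s := fun x hx => by
    have := (H.hw x (ball_subset_ball hr' hx)).1
    positivity
  set Ia := ∫ x in ball x₀ r, (max (V x) 0) ^ s with hIa
  set Iw := ∫ x in ball x₀ r', w x ^ s with hIw
  have hIa0 : 0 ≤ Ia := setIntegral_nonneg measurableSet_ball fun x _ => by positivity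
  have hIw0 : 0 ≤ Iw := setIntegral_nonneg measurableSet_ball hw0
  have hww : ∫ x in ball x₀ r, w x ^ s ≤ Iw := by
    refine setIntegral_mono_set iws' ?_ (Filter.Eventually.of_forall
      (ball_subset_ball (by linarith [abs_nonneg h])))
    exact (ae_restrict_iff' measurableSet_ball).2 (Filter.Eventually.of_forall hw0)
  have hD : ∫ x in ball x₀ r, ((max (V x) 0) ^ s + w x ^ s) ≤ Ia + Iw := by
    rw [integral_add ias iws]; linarith
  have hYq : ∀ m, m ≤ p + 2 → ∫ x in ball x₀ r, (max (V x) 0) ^ q * w x ^ m ≤ Ia + Iw := by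
    intro m hm
    refine (setIntegral_mono_on (int _ ((ca q (by linarith)).mul (cw.pow m))) (ias.add iws)
      measurableSet_ball fun x hx => ?_).trans hD
    exact young_q p (le_max_right _ _) (H.hw x (hsub hx)).1 hq.le m hm
  have B0 : |∫ x in ball x₀ r, Y0 x| ≤ n ^ 2 * KP * (Kβ * (1 + M)) * (2 + c) * (Ia + Iw) := by
    refine (H.Y_bound hr0 hr2 hq hc hKP hKβ p hη hη0 hη1 hηg hV hTP hβ).trans ?_
    exact mul_le_mul_of_nonneg_left (hYq (p + 1) (by omega)) (by positivity)
  have B1 : |∫ x in ball x₀ r, Y1 x| ≤ n ^ 2 * KT * (Kb * (1 + M)) * (2 + c) * (Ia + Iw) := by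
    refine (H.Y_bound hr0 hr2 hq hc hKT hKb (p + 1) hη hη0 hη1 hηg hV
      (fun x hx => (hT x hx).2) hb).trans ?_
    exact mul_le_mul_of_nonneg_left (hYq (p + 2) le_rfl) (by positivity)
  -- averages
  have avg : ∀ s' : ℝ, r + |s'| < r' → ∀ l : Fin n,
      IntegrableOn (fun x => ∫ t in (0 : ℝ)..1, w (x + t • (s' • (Pi.single l 1 : Fin n → ℝ))) ^ s)
        (ball x₀ r) ∧
      ∫ x in ball x₀ r, (∫ t in (0 : ℝ)..1, w (x + t • (s' • (Pi.single l 1 : Fin n → ℝ))) ^ s)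
        ≤ Iw := by
    intro s' hs' l
    refine avg_integral (f := fun x => w x ^ s) ?_ (cws.mono (closedBall_subset_closedBall hr')) hw0
    rw [norm_smul, norm_ei, mul_one, Real.norm_eq_abs]
    exact hs'
  have hrn : r + |(-h)| < r' := by rwa [abs_neg]
  have iD : IntegrableOn (fun x => (max (V x) 0) ^ s + w x ^ s) (ball x₀ r) := ias.add iws
  have B2 : |∫ x in ball x₀ r, Z x| ≤ KT * Λ * (1 + M) ^ 2 * (1 + 4 * n) * (Ia + Iw) := by
    have il : ∀ l : Fin n, IntegrableOn (fun x => 2 * ((max (V x) 0) ^ s + w x ^ s)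
        + (∫ t in (0 : ℝ)..1, w (x + t • (h • (Pi.single l 1 : Fin n → ℝ))) ^ s)
        + ∫ t in (0 : ℝ)..1, w (x + t • ((-h) • (Pi.single l 1 : Fin n → ℝ))) ^ s) (ball x₀ r) :=
      fun l => ((iD.const_mul 2).add (avg h hr l).1).add (avg (-h) hrn l).1
    have hb2 := norm_integral_le_of_norm_le (μ := volume.restrict (ball x₀ r)) (f := Z)
      (g := fun x => KT * Λ * (1 + M) ^ 2 * ((max (V x) 0) ^ s + w x ^ s + ∑ l : Fin n,
        (2 * ((max (V x) 0) ^ s + w x ^ s)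
        + (∫ t in (0 : ℝ)..1, w (x + t • (h • (Pi.single l 1 : Fin n → ℝ))) ^ s)
        + ∫ t in (0 : ℝ)..1, w (x + t • ((-h) • (Pi.single l 1 : Fin n → ℝ))) ^ s)))
      ((iD.add (integrable_finsetSum _ fun l _ => il l)).const_mul _)
      ((ae_restrict_iff' measurableSet_ball).2 (Filter.Eventually.of_forall fun x hx =>
        H.Zpt2 p hrR hh (hBK hx) hC0 hC1 hq (hη1 x) hKT (hT x (hsub hx)).1))
    rw [Real.norm_eq_abs] at hb2
    refine hb2.trans ?_
    rw [integral_const_mul, integral_add iD (integrable_finsetSum _ fun l _ => il l),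
      integral_finsetSum _ fun l _ => il l, mul_assoc (KT * Λ * (1 + M) ^ 2)]
    refine mul_le_mul_of_nonneg_left ?_ (by positivity)
    have hl : ∀ l : Fin n, (∫ x in ball x₀ r, (2 * ((max (V x) 0) ^ s + w x ^ s)
        + (∫ t in (0 : ℝ)..1, w (x + t • (h • (Pi.single l 1 : Fin n → ℝ))) ^ s)
        + ∫ t in (0 : ℝ)..1, w (x + t • ((-h) • (Pi.single l 1 : Fin n → ℝ))) ^ s))
        ≤ 4 * (Ia + Iw) := by
      intro l
      have e1 := integral_add ((iD.const_mul 2).add (avg h hr l).1) (avg (-h) hrn l).1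
      have e2 := integral_add (iD.const_mul 2) (avg h hr l).1
      simp only [Pi.add_apply] at e1
      rw [e1, e2, integral_const_mul]
      linarith [(avg h hr l).2, (avg (-h) hrn l).2]
    have hsum := Finset.sum_le_sum fun l (_ : l ∈ Finset.univ) => hl l
    rw [Finset.sum_const, Finset.card_univ, Fintype.card_fin, nsmul_eq_mul] at hsum
    linarith
  rw [E1, Finset.sum_congr rfl fun l _ => E2 l, ← Finset.mul_sum]
  have e : N * (-(∫ x in ball x₀ r, Y0 x) + (∫ x in ball x₀ r, Y1 x) - ∫ x in ball x₀ r, Zb x)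
      + N * ∑ l, ∫ x in ball x₀ r, Zl l x
      = N * (-(∫ x in ball x₀ r, Y0 x) + (∫ x in ball x₀ r, Y1 x) + ∫ x in ball x₀ r, Z x) := by
    rw [← E3]; ring
  rw [e, abs_mul, abs_of_nonneg hN0, mul_assoc]
  refine mul_le_mul hNn ?_ (abs_nonneg _) (by positivity)
  refine (abs_add_le _ _).trans ((add_le_add_left (abs_add_le _ _) _).trans ?_)
  rw [abs_neg]
  nlinarith [B0, B1, B2]

end Assembly
/-- Cancellation of higher order terms, scalar-`H` case
(Corollary 4.8, estimate (K), for classical functions). -/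
theorem cancellation_higher_order_scalarH
    {n : ℕ} (hn : 3 ≤ n) (k : ℕ) (hk2 : 2 ≤ k) (hkn : k ≤ n)
    (Ω : Set (Fin n → ℝ)) (hΩ : IsOpen Ω)
    (H₂ : ((Fin n → ℝ) × ℝ × (Fin n → ℝ)) → ℝ)
    (hH₂ : C11On H₂ (Ω ×ˢ ((univ : Set ℝ) ×ˢ (univ : Set (Fin n → ℝ)))))
    (x₀ : Fin n → ℝ) (R : ℝ) (hR : 0 < R)
    (hball : closure (ball x₀ (2 * R)) ⊆ Ω)
    (M : ℝ) (hM : 0 < M) (c₀ : ℝ) (hc₀ : 0 < c₀) :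
    ∃ C : ℝ, ∀ (u : (Fin n → ℝ) → ℝ) (C₁ q ρ h : ℝ) (η : (Fin n → ℝ) → ℝ),
      ContDiffOn ℝ 3 u Ω →
      (∀ x ∈ ball x₀ (2 * R), |u x| + vnorm (grad u x) ≤ M) →
      0 ≤ C₁ → C₁ ≤ M →
      (∀ x ∈ ball x₀ (2 * R), 1 ≤ lapl u x + C₁ ∧ matNorm (hess u x) ≤ lapl u x + C₁) →
      1 < q → 0 < ρ → ρ ≤ R / 3 → h ≠ 0 → |h| < ρ →
      ContDiff ℝ (⊤ : ℕ∞) η →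
      (∀ x, x ∉ ball x₀ (R + 2 * ρ) → η x = 0) →
      (∀ x, 0 ≤ η x ∧ η x ≤ 1) →
      (∀ x ∈ ball x₀ (R + ρ), η x = 1) →
      (∀ x, vnorm (grad η x) ≤ c₀ / ρ) →
      (∀ x, matNorm (hess η x) ≤ c₀ / ρ ^ 2) →
      (∫ x in ball x₀ (R + 2 * ρ),
          η x * (max ((∑ l : Fin n, ddq l h u x) + C₁) 0) ^ (q - 1) *
            ∑ j, (∑ i, pd i (fun y => newtonT (k - 1) (hess u y -
                  H₂ (y, u y, grad u y) • (1 : Matrix (Fin n) (Fin n) ℝ)) i j) x) *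
              pd j (fun y => (∑ l : Fin n, ddq l h u y) + C₁) x)
        + ∑ l : Fin n, ∫ x in ball x₀ (R + 2 * ρ),
            η x * (max ((∑ l' : Fin n, ddq l' h u x) + C₁) 0) ^ (q - 1) *
              ∑ i, ∑ j, newtonT (k - 1) (hess u x -
                  H₂ (x, u x, grad u x) • (1 : Matrix (Fin n) (Fin n) ℝ)) i j *
                ddq l h (fun y =>
                  (H₂ (y, u y, grad u y) • (1 : Matrix (Fin n) (Fin n) ℝ)) i j) x
      ≥ -(C / ρ) *
          ((∫ x in ball x₀ (R + 2 * ρ),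
              (max ((∑ l : Fin n, ddq l h u x) + C₁) 0) ^ (q + (k : ℝ)))
            + ∫ x in ball x₀ (R + 3 * ρ), (lapl u x + C₁) ^ (q + (k : ℝ))) := by
  obtain ⟨Λ, hG⟩ := exists_goodH hΩ hH₂ hR hball M
  obtain ⟨p, rfl⟩ : ∃ p, k = p + 2 := ⟨k - 2, by omega⟩
  have hΛ := hG.1
  obtain ⟨KP, hKP, hTP⟩ := T_bounds n p (by omega) M Λ hM.le hΛ
  obtain ⟨KT, hKT, hT⟩ := T_bounds n (p + 1) (by omega) M Λ hM.le hΛ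
  set Kβ := Λ * (2 + M) + 2 * Λ ^ 2 with hKβdef
  have hKβ : 0 ≤ Kβ := by positivity
  set D1 := n ^ 2 * KP * (Kβ * (1 + M)) + n ^ 2 * KT * (Λ * (1 + M)) with hD1
  set D2 := KT * Λ * (1 + M) ^ 2 * (1 + 4 * n) with hD2
  have hD10 : 0 ≤ D1 := by positivity
  have hD20 : 0 ≤ D2 := by positivity
  refine ⟨n * (D1 * (2 * R + c₀) + D2 * R), ?_⟩
  intro u C₁ q ρ h η hu hu1 hC0 hC1 hw hq hρ hρR hh hhρ hη hη0 hη1 _ hηg _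
  have hcl : closedBall x₀ (2 * R) ⊆ Ω := by
    rwa [closure_ball x₀ (by linarith : 2 * R ≠ 0)] at hball
  have hu3 : ∀ x ∈ closedBall x₀ (2 * R), ContDiffAt ℝ 3 u x := fun x hx =>
    hu.contDiffAt (hΩ.mem_nhds (hcl hx))
  have H : UCtx H₂ x₀ R M Λ u (fun x => lapl u x + C₁) := by
    refine ⟨hM.le, hG, hu3, hu1, hw, ?_⟩
    refine ContinuousOn.add (continuousOn_finsetSum _ fun l _ x hx => ?_) continuousOn_const
    exact (pd_contDiffAt (m := 1) l (pd_contDiffAt (m := 2) l (hu3 x hx) (by norm_num))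
      (by norm_num)).continuousAt.continuousWithinAt
  have hmain := H.main (r := R + 2 * ρ) (r' := R + 3 * ρ) (c := c₀ / ρ) (h := h) (q := q)
    (η := η) p hkn (by linarith) (by linarith) (by linarith) hh hC0 hC1 hq (by positivity) hKP hKT
    hΛ hKβ (hη.of_le (by exact_mod_cast le_top)) hη0 hη1
    (fun x j => (abs_comp_le_vnorm (grad η x) j).trans (hηg x))
    (fun x hx => (hTP H x hx).2) (fun x hx => hT H x hx)
    (fun i P hP => bCoef_bound hG hP i) (fun i P hP => betaCoef_bound hM.le hG hP i)
  refine ge_iff_le.2 (le_trans ?_ (abs_le.1 hmain).1)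
  rw [← hD1, ← hD2, neg_mul, neg_le_neg_iff]
  refine mul_le_mul_of_nonneg_right ?_ ?_
  · rw [mul_div_assoc]
    refine mul_le_mul_of_nonneg_left ?_ (by positivity)
    rw [add_div, mul_div_assoc, mul_div_assoc]
    have h1 : 1 ≤ R / ρ := by rw [le_div_iff₀ hρ]; linarith
    have h2 : 2 + c₀ / ρ ≤ (2 * R + c₀) / ρ := by
      rw [add_div, mul_div_assoc]; linarith
    have h3 := mul_le_mul_of_nonneg_left h2 hD10
    have h4 := mul_le_mul_of_nonneg_left h1 hD20
    linarith
  · refine add_nonneg (setIntegral_nonneg measurableSet_ball fun x _ => by positivity)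
      (setIntegral_nonneg measurableSet_ball fun x hx => ?_)
    have := (hw x (ball_subset_ball (by linarith) hx)).1
    positivity
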